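/- (Rosso–Green embedding) The kernel of Ξ equals the two-sided ideal of the concatenation algebra F generated by the q-Serre elements S_{ij} (i ≠ j). Consequently, Ξ induces a ℚ(q)-algebra isomorphism from U_q(n) — the free associative ℚ(q)-algebra on generators e_1,…,e_r modulo the two-sided ideal generated by the elements Σ_{k+l=1−a_{ij}} (−1)^k [1−a_{ij} choose k]_i e_i^k e_j e_i^l (i ≠ j) — onto the subalgebra 𝒰 of the q-shuffle algebra (F, *). -/

import Mathlib

open scoped BigOperators

noncomputable section

/-- The field `ℚ(q)` of rational functions over `ℚ`. -/
abbrev K : Type := RatFunc ℚ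

/-- The indeterminate `q`. -/
abbrev qq : K := RatFunc.X

/-- Words on the alphabet `{w_1, …, w_r}` (the free monoid `M`). -/
abbrev Word (r : ℕ) := List (Fin r)

/-- The space `F` with basis the words, as finitely supported families of coefficients. -/
abbrev FA (r : ℕ) := Word r →₀ K

variable {r : ℕ}

/-- `(|w|, |x|)` : the symmetric bilinear form evaluated on the degrees of two words,
where `p i j = (α_i, α_j)` is the form on simple roots. -/
def pairW (p : Fin r → Fin r → ℤ) (w x : Word r) : ℤ :=
  (w.map fun i => (x.map fun j => p i j).sum).sum

/-- Auxiliary q-shuffle on *reversed* words: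
`shAux p w x` is the q-shuffle of `w.reverse` and `x.reverse`; it implements the recursion
`(w·a) * (x·b) = (w * (x·b))·a + q^{-(|w·a|,|b|)} ((w·a) * x)·b`, `w[] * x = x * w[] = x`. -/
def shAux (p : Fin r → Fin r → ℤ) : Word r → Word r → FA r
  | [], x => Finsupp.single x.reverse 1
  | w, [] => Finsupp.single w.reverse 1
  | a :: w, b :: x =>
      Finsupp.mapDomain (fun u => u ++ [a]) (shAux p w (b :: x))
      + (qq ^ (-(pairW p (a :: w) [b]))) •
          Finsupp.mapDomain (fun u => u ++ [b]) (shAux p (a :: w) x)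
  termination_by w x => w.length + x.length
  decreasing_by all_goals (first | (simp only [List.length_cons]; omega) | omega)

/-- The q-shuffle product `*` on `F`, extended bilinearly from words. -/
def shuffle (p : Fin r → Fin r → ℤ) (f g : FA r) : FA r :=
  f.sum fun w c => g.sum fun x d => (c * d) • shAux p w.reverse x.reverse

/-- Membership in `𝒰`, the `ℚ(q)`-subalgebra of `(F, *)` generated by the letters `w_i`. -/
inductive InU (p : Fin r → Fin r → ℤ) : FA r → Prop
  | letter (i : Fin r) : InU p (Finsupp.single [i] 1)
  | one : InU p (Finsupp.single ([] : Word r) 1)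
  | add : ∀ {f g : FA r}, InU p f → InU p g → InU p (f + g)
  | smul : ∀ (c : K) {f : FA r}, InU p f → InU p (c • f)
  | mul : ∀ {f g : FA r}, InU p f → InU p g → InU p (shuffle p f g)

/-- The concatenation product on `F`. -/
def cmul (f g : FA r) : FA r :=
  f.sum fun w c => g.sum fun x d => Finsupp.single (w ++ x) (c * d)

/-- `Ξ` on a word: the q-shuffle product of its letters. -/
def xiWord (p : Fin r → Fin r → ℤ) : Word r → FA r
  | [] => Finsupp.single ([] : Word r) 1
  | i :: w => shuffle p (Finsupp.single [i] 1) (xiWord p w)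

/-- The linear map `Ξ : (F, concatenation) → (F, *)`, `Ξ(w_{i₁}⋯w_{i_k}) = w_{i₁} * ⋯ * w_{i_k}`. -/
def xi (p : Fin r → Fin r → ℤ) (f : FA r) : FA r :=
  f.sum fun w c => c • xiWord p w

/-- The q-integer `[n]_i = (q_i^n − q_i^{−n})/(q_i − q_i^{−1})` with `q_i = q^{d_i}`. -/
def qInt (di : ℤ) (n : ℤ) : K :=
  (qq ^ (di * n) - qq ^ (-(di * n))) / (qq ^ di - qq ^ (-di))

/-- The q-binomial coefficient `[m choose k]_i = [m]_i⋯[m−k+1]_i / ([k]_i⋯[1]_i)`. -/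
def qBinom (di : ℤ) (m k : ℕ) : K :=
  (∏ t ∈ Finset.range k, qInt di ((m : ℤ) - t)) / (∏ t ∈ Finset.range k, qInt di ((t : ℤ) + 1))

/-- The data of the Cartan matrix `[a_{ij}]` of a finite-dimensional complex simple
Lie algebra of rank `r`: an integral matrix with `2` on the diagonal and nonpositive
off-diagonal entries, symmetrizable by `d_i ∈ {1,2,3}`, whose symmetrization
`(α_i, α_j) = d_i a_{ij}` is positive definite, and which is indecomposable. -/
structure CartanData (r : ℕ) where
  a : Fin r → Fin r → ℤ
  d : Fin r → ℤ
  diag : ∀ i, a i i = 2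
  offdiag : ∀ i j, i ≠ j → a i j ≤ 0
  dval : ∀ i, d i = 1 ∨ d i = 2 ∨ d i = 3
  dsymm : ∀ i j, d i * a i j = d j * a j i
  posdef : ∀ v : Fin r → ℚ, v ≠ 0 → 0 < ∑ i, ∑ j, v i * v j * ((d i * a i j : ℤ) : ℚ)
  indec : ∀ s : Finset (Fin r), s.Nonempty → s ≠ Finset.univ →
    ∃ i ∈ s, ∃ j, j ∉ s ∧ a i j ≠ 0

/-- The symmetric bilinear form `(α_i, α_j) = d_i a_{ij}` on simple roots. -/
def CartanData.p (C : CartanData r) : Fin r → Fin r → ℤ := fun i j => C.d i * C.a i j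

/-- The q-Serre element `S_{ij} = Σ_{k+l=1−a_{ij}} (−1)^k [1−a_{ij} choose k]_i
w_i^k w_j w_i^l ∈ F` (concatenation powers). -/
def serre (C : CartanData r) (i j : Fin r) : FA r :=
  ∑ k ∈ Finset.range ((1 - C.a i j).toNat + 1),
    ((-1 : K) ^ k * qBinom (C.d i) ((1 - C.a i j).toNat) k) •
      Finsupp.single
        (List.replicate k i ++ [j] ++ List.replicate ((1 - C.a i j).toNat - k) i) 1

/-!
Identify `(F, ·)` with the free algebra and equip it with Lusztig's left and right skew
derivations. The `q`-shuffle recursion says that deleting a last letter `w_i` from `Ξ(x)` amounts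
to applying the left derivation `_ir` to `x`. Hence the coefficients of `Ξ(x)` are the constant
terms of the iterated derivatives of `x`, and `ker Ξ` is the largest derivation-stable subspace
without constant terms.

The `q`-Serre elements are, up to sign, the iterated `q`-commutators `(ad e_i)^{1 - a_{ij}} e_j`,
and are killed by all derivations, so the ideal they generate lies in `ker Ξ`. Conversely, in the
quotient by this ideal `ad e_i` is locally nilpotent on the kernel of `r_i`. If `x` of degree `ν`
is killed by both `_ir` and `r_i`, then `_ir` lowers `(ad e_i)^{n+1} x` to a multiple of
`(ad e_i)^n x` that is nonzero as soon as `(ν, α_i) > 0`, so `x = 0`. Positive definiteness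
provides such an `i` for every `ν ≠ 0`, and the theorem follows by induction on `ν`.
-/

/-! ### Skew derivations -/

/-- A system of left and right skew derivations on an `R`-algebra generated by elements `gen i`:
`derivL i` and `derivR i` send `gen j` to `δ_{ij}` and satisfy the Leibniz rule up to the
endomorphism `twist i`, which rescales `gen j` by `χ i j`. For `χ i j = q^{-(α_i, α_j)}`
these are Lusztig's operators `_ir` and `r_i`. -/
structure SkewDerivations {ι R : Type*} [DecidableEq ι] [CommRing R] (χ : ι → ι → R)
    (A : Type*) [Ring A] [Algebra R A] where
  gen : ι → A
  twist : ι → A →ₐ[R] A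
  derivL : ι → A →ₗ[R] A
  derivR : ι → A →ₗ[R] A
  twist_gen : ∀ i j, twist i (gen j) = χ i j • gen j
  derivL_gen : ∀ i j, derivL i (gen j) = if i = j then 1 else 0
  derivR_gen : ∀ i j, derivR i (gen j) = if i = j then 1 else 0
  derivL_mul : ∀ i x y, derivL i (x * y) = derivL i x * y + twist i x * derivL i y
  derivR_mul : ∀ i x y, derivR i (x * y) = x * derivR i y + derivR i x * twist i y
  adjoin_gen : Algebra.adjoin R (Set.range gen) = ⊤

namespace SkewDerivations

section CommRing

variable {ι R A : Type*} [DecidableEq ι] [CommRing R] [Ring A] [Algebra R A] {χ : ι → ι → R}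
  (S : SkewDerivations χ A)

theorem mem_of_gen_mul_mem {P : Submodule R A} (one_mem : 1 ∈ P)
    (gen_mul_mem : ∀ j, ∀ x ∈ P, S.gen j * x ∈ P) (x : A) : x ∈ P := by
  suffices h : ∀ y ∈ Algebra.adjoin R (Set.range S.gen), ∀ z ∈ P, y * z ∈ P by
    simpa using h x (S.adjoin_gen ▸ Algebra.mem_top) 1 one_mem
  intro y hy
  induction hy using Algebra.adjoin_induction with
  | mem y hy => obtain ⟨j, rfl⟩ := hy; exact gen_mul_mem j
  | algebraMap c => intro z hz; simpa [← Algebra.smul_def] using P.smul_mem c hz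
  | add y y' _ _ hy hy' => intro z hz; simpa [add_mul] using P.add_mem (hy z hz) (hy' z hz)
  | mul y y' _ _ hy hy' => intro z hz; simpa [mul_assoc] using hy _ (hy' z hz)

theorem linearMap_ext {M : Type*} [AddCommGroup M] [Module R M] {f g : A →ₗ[R] M}
    (map_one : f 1 = g 1)
    (map_gen_mul : ∀ j x, f x = g x → f (S.gen j * x) = g (S.gen j * x)) : f = g :=
  LinearMap.ext <| S.mem_of_gen_mul_mem (P := LinearMap.eqLocus f g) map_one map_gen_mul

theorem derivL_one (i : ι) : S.derivL i 1 = 0 := by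
  simpa using S.derivL_mul i 1 1

theorem derivR_one (i : ι) : S.derivR i 1 = 0 := by
  simpa using S.derivR_mul i 1 1

theorem twist_gen_mul (i j : ι) (x : A) :
    S.twist i (S.gen j * x) = χ i j • (S.gen j * S.twist i x) := by
  rw [map_mul, S.twist_gen, smul_mul_assoc]

theorem derivL_gen_mul (i j : ι) (x : A) :
    S.derivL i (S.gen j * x) = (if i = j then x else 0) + χ i j • (S.gen j * S.derivL i x) := by
  rw [S.derivL_mul, S.derivL_gen, S.twist_gen, ite_mul, one_mul, zero_mul, smul_mul_assoc]

theorem derivR_gen_mul (i j : ι) (x : A) :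
    S.derivR i (S.gen j * x) = S.gen j * S.derivR i x + if i = j then S.twist i x else 0 := by
  rw [S.derivR_mul, S.derivR_gen, ite_mul, one_mul, zero_mul]

theorem twist_twist (i j : ι) (x : A) : S.twist i (S.twist j x) = S.twist j (S.twist i x) := by
  have h : (S.twist i).comp (S.twist j) = (S.twist j).comp (S.twist i) := by
    refine AlgHom.ext_of_adjoin_eq_top S.adjoin_gen ?_
    rintro _ ⟨l, rfl⟩
    simp [S.twist_gen, smul_comm (χ i l)]
  exact DFunLike.congr_fun h x

theorem derivL_twist (i j : ι) (x : A) :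
    S.derivL j (S.twist i x) = χ i j • S.twist i (S.derivL j x) := by
  suffices h : S.derivL j ∘ₗ (S.twist i).toLinearMap = χ i j • (S.twist i).toLinearMap ∘ₗ S.derivL j
    from DFunLike.congr_fun h x
  refine S.linearMap_ext (by simp [S.derivL_one]) fun l y hy => ?_
  simp only [LinearMap.comp_apply, LinearMap.smul_apply, AlgHom.toLinearMap_apply] at hy ⊢
  rw [S.twist_gen_mul, map_smul, S.derivL_gen_mul, S.derivL_gen_mul, hy, map_add, map_smul,
    S.twist_gen_mul]
  split_ifs with h
  · subst h; simp only [mul_smul_comm, smul_add, smul_smul, mul_comm]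
  · simp only [mul_smul_comm, smul_add, smul_smul, map_zero, smul_zero, mul_left_comm, mul_comm]

theorem derivR_twist (i j : ι) (x : A) :
    S.derivR j (S.twist i x) = χ i j • S.twist i (S.derivR j x) := by
  suffices h : S.derivR j ∘ₗ (S.twist i).toLinearMap = χ i j • (S.twist i).toLinearMap ∘ₗ S.derivR j
    from DFunLike.congr_fun h x
  refine S.linearMap_ext (by simp [S.derivR_one]) fun l y hy => ?_
  simp only [LinearMap.comp_apply, LinearMap.smul_apply, AlgHom.toLinearMap_apply] at hy ⊢
  rw [S.twist_gen_mul, map_smul, S.derivR_gen_mul, S.derivR_gen_mul, hy, map_add, S.twist_gen_mul]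
  split_ifs with h
  · subst h; simp only [mul_smul_comm, smul_add, smul_smul, S.twist_twist j i]
  · simp only [mul_smul_comm, smul_add, smul_smul, map_zero, smul_zero, mul_comm]

theorem derivL_derivR (hχ : ∀ i j, χ i j = χ j i) (i j : ι) (x : A) :
    S.derivL i (S.derivR j x) = S.derivR j (S.derivL i x) := by
  suffices h : S.derivL i ∘ₗ S.derivR j = S.derivR j ∘ₗ S.derivL i from DFunLike.congr_fun h x
  refine S.linearMap_ext (by simp [S.derivL_one, S.derivR_one]) fun l y hy => ?_
  simp only [LinearMap.comp_apply] at hy ⊢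
  rw [S.derivR_gen_mul, map_add, S.derivL_gen_mul, S.derivL_gen_mul, map_add, map_smul,
    S.derivR_gen_mul, hy, apply_ite (S.derivL i), apply_ite (S.derivR j), S.derivL_twist, map_zero,
    map_zero, smul_add, add_assoc]
  rcases eq_or_ne j l with rfl | hjl
  · rw [if_pos rfl, if_pos rfl, hχ j i]
  · rw [if_neg hjl, if_neg hjl, smul_zero]

theorem twist_gen_pow (i j : ι) (n : ℕ) : S.twist i (S.gen j ^ n) = χ i j ^ n • S.gen j ^ n := by
  rw [map_pow, S.twist_gen, smul_pow]

theorem derivR_gen_pow (i : ι) (n : ℕ) :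
    S.derivR i (S.gen i ^ (n + 1)) = (∑ m ∈ Finset.range (n + 1), χ i i ^ m) • S.gen i ^ n := by
  induction n with
  | zero => simp [S.derivR_gen]
  | succ n ih =>
    rw [pow_succ', S.derivR_gen_mul, ih, if_pos rfl, S.twist_gen_pow, mul_smul_comm, ← pow_succ',
      ← add_smul, ← Finset.sum_range_succ]

/-- The `q`-adjoint action `x ↦ e_i x - (twist_i x) e_i` of a generator. -/
def qAd (i : ι) : A →ₗ[R] A :=
  LinearMap.mulLeft R (S.gen i) - LinearMap.mulRight R (S.gen i) ∘ₗ (S.twist i).toLinearMap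

theorem qAd_apply (i : ι) (x : A) : S.qAd i x = S.gen i * x - S.twist i x * S.gen i := rfl

theorem qAd_one (i : ι) : S.qAd i 1 = 0 := by simp [qAd_apply]

theorem qAd_mul (i : ι) (x y : A) : S.qAd i (x * y) = S.qAd i x * y + S.twist i x * S.qAd i y := by
  simp only [qAd_apply, map_mul]; noncomm_ring

theorem twist_qAd_pow (i j : ι) (n : ℕ) (x : A) :
    S.twist j ((S.qAd i ^ n) x) = χ j i ^ n • (S.qAd i ^ n) (S.twist j x) := by
  have twist_qAd (y : A) : S.twist j (S.qAd i y) = χ j i • S.qAd i (S.twist j y) := by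
    simp only [qAd_apply, map_sub, map_mul, S.twist_gen, S.twist_twist i j, smul_mul_assoc,
      mul_smul_comm, smul_sub]
  induction n with
  | zero => simp
  | succ n ih => simp only [pow_succ', Module.End.mul_apply, twist_qAd, ih, map_smul, smul_smul]

theorem derivL_qAd_self (i : ι) (x : A) :
    S.derivL i (S.qAd i x) = x - S.twist i (S.twist i x) + χ i i • S.qAd i (S.derivL i x) := by
  rw [qAd_apply, map_sub, S.derivL_gen_mul, S.derivL_mul, S.derivL_twist, S.derivL_gen, if_pos rfl,
    if_pos rfl, mul_one, qAd_apply, smul_sub, smul_mul_assoc]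
  abel

theorem derivL_qAd_pow_of_ne {i j : ι} (hij : i ≠ j) (hχ : χ i j = χ j i) (n : ℕ) (x : A) :
    S.derivL i ((S.qAd j ^ n) x) = χ i j ^ n • (S.qAd j ^ n) (S.derivL i x) := by
  have derivL_qAd (y : A) : S.derivL i (S.qAd j y) = χ i j • S.qAd j (S.derivL i y) := by
    rw [qAd_apply, map_sub, S.derivL_gen_mul, S.derivL_mul, S.derivL_twist, S.derivL_gen,
      if_neg hij, if_neg hij, mul_zero, zero_add, add_zero, qAd_apply, smul_sub, smul_mul_assoc, hχ]
  induction n with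
  | zero => simp
  | succ n ih => simp only [pow_succ', Module.End.mul_apply, derivL_qAd, ih, map_smul, smul_smul]

theorem derivR_qAd_self {i : ι} {x : A} (hx : S.derivR i x = 0) : S.derivR i (S.qAd i x) = 0 := by
  simp [qAd_apply, S.derivR_gen_mul, S.derivR_mul, S.derivR_twist, S.derivR_gen, hx]

theorem derivR_qAd_of_ne {i j : ι} (hij : i ≠ j) (x : A) :
    S.derivR i (S.qAd j x) =
      S.gen j * S.derivR i x - (χ j i * χ i j) • (S.twist j (S.derivR i x) * S.gen j) := by
  rw [qAd_apply, map_sub, S.derivR_gen_mul, S.derivR_mul, S.derivR_twist, S.derivR_gen, if_neg hij,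
    if_neg hij, mul_zero, zero_add, add_zero, S.twist_gen, smul_mul_smul_comm]

theorem derivL_qAd_pow {i : ι} {x : A} {b : R} (hL : S.derivL i x = 0) (hb : S.twist i x = b • x)
    (n : ℕ) : S.derivL i ((S.qAd i ^ (n + 1)) x) =
      ((∑ m ∈ Finset.range (n + 1), χ i i ^ m) * (1 - b ^ 2 * χ i i ^ n)) • (S.qAd i ^ n) x := by
  have twist_twist_qAd_pow (m : ℕ) : S.twist i (S.twist i ((S.qAd i ^ m) x)) =
      (b ^ 2 * χ i i ^ (2 * m)) • (S.qAd i ^ m) x := by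
    simp only [S.twist_qAd_pow, hb, map_smul, smul_smul]
    ring_nf
  have derivL_succ (m : ℕ) : S.derivL i ((S.qAd i ^ (m + 1)) x) =
      (1 - b ^ 2 * χ i i ^ (2 * m)) • (S.qAd i ^ m) x +
        χ i i • S.qAd i (S.derivL i ((S.qAd i ^ m) x)) := by
    rw [pow_succ', Module.End.mul_apply, S.derivL_qAd_self, twist_twist_qAd_pow, sub_smul, one_smul]
  induction n with
  | zero => rw [derivL_succ 0]; simp [hL]
  | succ n ih =>
    rw [derivL_succ, ih, map_smul, ← Module.End.mul_apply, ← pow_succ', smul_smul, ← add_smul]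
    congr 1
    have geom := mul_neg_geom_sum (χ i i) (n + 1)
    rw [Finset.sum_range_succ _ (n + 1)]
    linear_combination -geom

theorem derivR_qAd_pow_gen_self (hχ : ∀ i j, χ i j = χ j i) {i j : ι} (hij : i ≠ j) (n : ℕ) :
    S.derivR j ((S.qAd i ^ n) (S.gen j)) =
      (∏ m ∈ Finset.range n, (1 - χ i j ^ 2 * χ i i ^ m)) • S.gen i ^ n := by
  induction n with
  | zero => simp [S.derivR_gen]
  | succ n ih =>
    rw [pow_succ', Module.End.mul_apply, S.derivR_qAd_of_ne hij.symm, ih, map_smul, S.twist_gen_pow,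
      Finset.prod_range_succ, hχ j i]
    simp only [mul_smul_comm, smul_mul_assoc, smul_smul, ← pow_succ, ← pow_succ', ← sub_smul]
    ring_nf

theorem derivL_qAd_pow_gen (hχ : ∀ i j, χ i j = χ j i) {i j : ι} (hij : i ≠ j) {n : ℕ}
    (hn : χ i j ^ 2 * χ i i ^ n = 1) (l : ι) :
    S.derivL l ((S.qAd i ^ (n + 1)) (S.gen j)) = 0 := by
  rcases eq_or_ne l i with rfl | hli
  · rw [S.derivL_qAd_pow (by rw [S.derivL_gen, if_neg hij]) (S.twist_gen l j), hn, sub_self,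
      mul_zero, zero_smul]
  · have qAd_pow_one : (S.qAd i ^ (n + 1)) 1 = 0 := by
      rw [pow_succ, Module.End.mul_apply, S.qAd_one, map_zero]
    rw [S.derivL_qAd_pow_of_ne hli (hχ l i), S.derivL_gen, apply_ite (S.qAd i ^ (n + 1)), map_zero,
      qAd_pow_one, ite_self, smul_zero]

theorem derivR_qAd_pow_gen (hχ : ∀ i j, χ i j = χ j i) {i j : ι} (hij : i ≠ j) {n : ℕ}
    (hn : χ i j ^ 2 * χ i i ^ n = 1) (l : ι) :
    S.derivR l ((S.qAd i ^ (n + 1)) (S.gen j)) = 0 := by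
  rcases eq_or_ne l j with rfl | hlj
  · rw [S.derivR_qAd_pow_gen_self hχ hij, Finset.prod_range_succ, hn, sub_self, mul_zero, zero_smul]
  · have derivR_qAd_pow (m : ℕ) : S.derivR l ((S.qAd i ^ m) (S.gen j)) = 0 := by
      induction m with
      | zero => simp [S.derivR_gen, hlj]
      | succ m ih =>
        rw [pow_succ', Module.End.mul_apply]
        rcases eq_or_ne l i with rfl | hli
        · exact S.derivR_qAd_self ih
        · simp [S.derivR_qAd_of_ne hli, ih]
    exact derivR_qAd_pow (n + 1)

theorem derivR_sum_mul_gen_pow {i : ι} {b : ℕ → A} (hb : ∀ n, S.derivR i (b n) = 0) (N : ℕ) :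
    S.derivR i (∑ n ∈ Finset.range (N + 1), b n * S.gen i ^ n) =
      ∑ n ∈ Finset.range N,
        ((∑ m ∈ Finset.range (n + 1), χ i i ^ m) • b (n + 1)) * S.gen i ^ n := by
  rw [Finset.sum_range_succ', map_add, map_sum, pow_zero, mul_one, hb, add_zero]
  refine Finset.sum_congr rfl fun n _ => ?_
  rw [S.derivR_mul, hb, zero_mul, add_zero, S.derivR_gen_pow, mul_smul_comm, smul_mul_assoc]

/-- The elements killed by `derivR i` on which `qAd i` is locally nilpotent. -/
def nilpotentKer (i : ι) : Submodule R A :=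
  LinearMap.ker (S.derivR i) ⊓ Module.End.maxGenEigenspace (S.qAd i) 0

theorem mem_nilpotentKer {i : ι} {x : A} :
    x ∈ S.nilpotentKer i ↔ S.derivR i x = 0 ∧ ∃ n : ℕ, (S.qAd i ^ n) x = 0 := by
  simp [nilpotentKer, Module.End.mem_maxGenEigenspace]

theorem one_mem_nilpotentKer (i : ι) : 1 ∈ S.nilpotentKer i :=
  S.mem_nilpotentKer.mpr ⟨S.derivR_one i, 1, by rw [pow_one, S.qAd_one]⟩

theorem qAd_mem_nilpotentKer {i : ι} {x : A} (hx : x ∈ S.nilpotentKer i) :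
    S.qAd i x ∈ S.nilpotentKer i := by
  obtain ⟨hR, n, hn⟩ := S.mem_nilpotentKer.mp hx
  refine S.mem_nilpotentKer.mpr ⟨S.derivR_qAd_self hR, n, ?_⟩
  rw [← Module.End.mul_apply, ← pow_succ, pow_succ', Module.End.mul_apply, hn, map_zero]

end CommRing

section Field

variable {ι 𝕜 A : Type*} [DecidableEq ι] [Field 𝕜] [Ring A] [Algebra 𝕜 A] {χ : ι → ι → 𝕜}
  (S : SkewDerivations χ A)

theorem qAd_pow_twist_eq_zero {i : ι} (hi : χ i i ≠ 0) {n : ℕ} {x : A} (hx : (S.qAd i ^ n) x = 0) :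
    (S.qAd i ^ n) (S.twist i x) = 0 := by
  have h := S.twist_qAd_pow i i n x
  rw [hx, map_zero] at h
  exact (smul_eq_zero.mp h.symm).resolve_left (pow_ne_zero n hi)

theorem qAd_pow_add_mul_eq_zero {i : ι} (hi : χ i i ≠ 0) {m n : ℕ} {x y : A}
    (hx : (S.qAd i ^ m) x = 0) (hy : (S.qAd i ^ n) y = 0) : (S.qAd i ^ (m + n)) (x * y) = 0 := by
  induction h : m + n generalizing m n x y with
  | zero =>
    obtain rfl : m = 0 := by omega
    rw [pow_zero, Module.End.one_apply] at hx
    rw [hx, zero_mul, map_zero]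
  | succ N ih =>
    rcases m with _ | m
    · rw [pow_zero, Module.End.one_apply] at hx
      rw [hx, zero_mul, map_zero]
    rcases n with _ | n
    · rw [pow_zero, Module.End.one_apply] at hy
      rw [hy, mul_zero, map_zero]
    have hx' : (S.qAd i ^ m) (S.qAd i x) = 0 := by rwa [← Module.End.mul_apply, ← pow_succ]
    have hy' : (S.qAd i ^ n) (S.qAd i y) = 0 := by rwa [← Module.End.mul_apply, ← pow_succ]
    rw [pow_succ, Module.End.mul_apply, S.qAd_mul, map_add, ih hx' hy (by omega),
      ih (S.qAd_pow_twist_eq_zero hi hx) hy' (by omega), add_zero]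

theorem twist_mem_nilpotentKer {i : ι} (hi : χ i i ≠ 0) {x : A} (hx : x ∈ S.nilpotentKer i) :
    S.twist i x ∈ S.nilpotentKer i := by
  obtain ⟨hR, n, hn⟩ := S.mem_nilpotentKer.mp hx
  refine S.mem_nilpotentKer.mpr ⟨?_, n, S.qAd_pow_twist_eq_zero hi hn⟩
  rw [S.derivR_twist, hR, map_zero, smul_zero]

theorem gen_mul_mem_nilpotentKer {i j : ι} (hi : χ i i ≠ 0) (hij : i ≠ j)
    (hj : ∃ n : ℕ, (S.qAd i ^ n) (S.gen j) = 0) {x : A} (hx : x ∈ S.nilpotentKer i) :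
    S.gen j * x ∈ S.nilpotentKer i := by
  obtain ⟨hR, n, hn⟩ := S.mem_nilpotentKer.mp hx
  obtain ⟨m, hm⟩ := hj
  refine S.mem_nilpotentKer.mpr ⟨?_, m + n, S.qAd_pow_add_mul_eq_zero hi hm hn⟩
  rw [S.derivR_gen_mul, hR, if_neg hij, mul_zero, add_zero]

theorem iSup_nilpotentKer_mul_gen_pow {i : ι} (hi : χ i i ≠ 0)
    (hnil : ∀ j, i ≠ j → ∃ n : ℕ, (S.qAd i ^ n) (S.gen j) = 0) :
    ⨆ n : ℕ, (S.nilpotentKer i).map (LinearMap.mulRight 𝕜 (S.gen i ^ n)) = ⊤ := by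
  set P := ⨆ n : ℕ, (S.nilpotentKer i).map (LinearMap.mulRight 𝕜 (S.gen i ^ n))
  have mul_pow_mem {b : A} (hb : b ∈ S.nilpotentKer i) (n : ℕ) : b * S.gen i ^ n ∈ P :=
    Submodule.mem_iSup_of_mem n ⟨b, hb, rfl⟩
  refine Submodule.eq_top_iff'.mpr (S.mem_of_gen_mul_mem ?_ fun j x hx => ?_)
  · simpa using mul_pow_mem (S.one_mem_nilpotentKer i) 0
  suffices h : P ≤ P.comap (LinearMap.mulLeft 𝕜 (S.gen j)) from h hx
  refine iSup_le fun n => ?_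
  rintro _ ⟨b, hb, rfl⟩
  rw [Submodule.mem_comap, LinearMap.mulLeft_apply, LinearMap.mulRight_apply]
  rcases eq_or_ne i j with rfl | hij
  · have move_gen : S.gen i * (b * S.gen i ^ n) =
        S.qAd i b * S.gen i ^ n + S.twist i b * S.gen i ^ (n + 1) := by
      rw [qAd_apply, pow_succ']; noncomm_ring
    rw [move_gen]
    exact add_mem (mul_pow_mem (S.qAd_mem_nilpotentKer hb) n)
      (mul_pow_mem (S.twist_mem_nilpotentKer hi hb) (n + 1))
  · rw [← mul_assoc]
    exact mul_pow_mem (S.gen_mul_mem_nilpotentKer hi hij (hnil j hij) hb) n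

theorem exists_eq_sum_mul_gen_pow {i : ι} (hi : χ i i ≠ 0)
    (hnil : ∀ j, i ≠ j → ∃ n : ℕ, (S.qAd i ^ n) (S.gen j) = 0) (x : A) :
    ∃ (N : ℕ) (b : ℕ → A), (∀ n, b n ∈ S.nilpotentKer i) ∧
      x = ∑ n ∈ Finset.range N, b n * S.gen i ^ n := by
  have hx : x ∈ ⨆ n : ℕ, (S.nilpotentKer i).map (LinearMap.mulRight 𝕜 (S.gen i ^ n)) :=
    S.iSup_nilpotentKer_mul_gen_pow hi hnil ▸ Submodule.mem_top
  obtain ⟨f, hf, rfl⟩ := Submodule.mem_iSup_iff_exists_finsupp _ _ |>.mp hx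
  choose b hb hbf using hf
  refine ⟨f.support.sup id + 1, b, hb, ?_⟩
  have support_subset : f.support ⊆ Finset.range (f.support.sup id + 1) := fun n hn =>
    Finset.mem_range_succ_iff.mpr (Finset.le_sup (f := id) hn)
  rw [Finsupp.sum_of_support_subset f support_subset _ fun _ _ => rfl]
  exact Finset.sum_congr rfl fun n _ => (hbf n).symm

theorem eq_zero_of_derivR_sum_mul_gen_pow_eq_zero {i : ι}
    (hgeom : ∀ n, ∑ m ∈ Finset.range (n + 1), χ i i ^ m ≠ 0) {N : ℕ} {b : ℕ → A}
    (hb : ∀ n, S.derivR i (b n) = 0)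
    (h : S.derivR i (∑ n ∈ Finset.range (N + 1), b n * S.gen i ^ n) = 0) :
    ∀ n < N, b (n + 1) = 0 := by
  induction N generalizing b with
  | zero => simp
  | succ N ih =>
    rw [S.derivR_sum_mul_gen_pow hb] at h
    set c : ℕ → A := fun n => (∑ m ∈ Finset.range (n + 1), χ i i ^ m) • b (n + 1) with hc
    have c_succ : ∀ n < N, c (n + 1) = 0 :=
      ih (fun n => by rw [hc, map_smul, hb, smul_zero]) (by rw [h, map_zero])
    have c_zero : c 0 = 0 := by
      rw [Finset.sum_range_succ', Finset.sum_eq_zero, zero_add, pow_zero, mul_one] at h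
      · exact h
      · intro n hn
        exact (congrArg (· * _) (c_succ n (Finset.mem_range.mp hn))).trans (zero_mul _)
    rintro (_ | n) hn
    · exact (smul_eq_zero.mp c_zero).resolve_left (hgeom 0)
    · exact (smul_eq_zero.mp (c_succ n (by omega))).resolve_left (hgeom (n + 1))

theorem mem_nilpotentKer_of_derivR_eq_zero {i : ι} (hi : χ i i ≠ 0)
    (hgeom : ∀ n, ∑ m ∈ Finset.range (n + 1), χ i i ^ m ≠ 0)
    (hnil : ∀ j, i ≠ j → ∃ n : ℕ, (S.qAd i ^ n) (S.gen j) = 0) {x : A} (hx : S.derivR i x = 0) :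
    x ∈ S.nilpotentKer i := by
  obtain ⟨_ | N, b, hb, rfl⟩ := S.exists_eq_sum_mul_gen_pow hi hnil x
  · simp
  have b_succ := S.eq_zero_of_derivR_sum_mul_gen_pow_eq_zero hgeom
    (fun n => (S.mem_nilpotentKer.mp (hb n)).1) hx
  rw [Finset.sum_range_succ', Finset.sum_eq_zero, zero_add, pow_zero, mul_one]
  · exact hb 0
  · intro n hn
    rw [b_succ n (Finset.mem_range.mp hn), zero_mul]

/- The vector `x` behaves like a lowest weight vector of the locally finite `qAd i`: since
`derivL i` lowers `qAd i ^ (n + 1) x` to a nonzero multiple of `qAd i ^ n x`, no power of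
`qAd i` can kill a nonzero `x`. -/
theorem eq_zero_of_derivL_eq_zero_of_derivR_eq_zero {i : ι} (hi : χ i i ≠ 0)
    (hgeom : ∀ n, ∑ m ∈ Finset.range (n + 1), χ i i ^ m ≠ 0)
    (hnil : ∀ j, i ≠ j → ∃ n : ℕ, (S.qAd i ^ n) (S.gen j) = 0) {x : A} {b : 𝕜}
    (hL : S.derivL i x = 0) (hR : S.derivR i x = 0) (htwist : S.twist i x = b • x)
    (hb : ∀ n : ℕ, b ^ 2 * χ i i ^ n ≠ 1) : x = 0 := by
  obtain ⟨-, n, hn⟩ := S.mem_nilpotentKer.mp (S.mem_nilpotentKer_of_derivR_eq_zero hi hgeom hnil hR)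
  induction n with
  | zero => simpa using hn
  | succ n ih =>
    refine ih ?_
    have h := S.derivL_qAd_pow hL htwist n
    rw [hn, map_zero] at h
    exact (smul_eq_zero.mp h.symm).resolve_left
      (mul_ne_zero (hgeom n) (sub_ne_zero.mpr (hb n).symm))

end Field

end SkewDerivations

/-! ### Quotients by stable ideals -/

section Quotient

variable {R A : Type*} [CommRing R] [Ring A] [Algebra R A]

/-- The endomorphism of `A ⧸ I` induced by a linear endomorphism of `A` preserving `I`. -/
def quotientEnd (I : Ideal A) [I.IsTwoSided] (f : A →ₗ[R] A) (hf : ∀ x ∈ I, f x ∈ I) :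
    A ⧸ I →ₗ[R] A ⧸ I :=
  (I.restrictScalars R).mapQ (I.restrictScalars R) f hf

theorem quotientEnd_mk (I : Ideal A) [I.IsTwoSided] (f : A →ₗ[R] A) (hf : ∀ x ∈ I, f x ∈ I)
    (x : A) : quotientEnd I f hf (Ideal.Quotient.mk I x) = Ideal.Quotient.mk I (f x) := rfl

namespace SkewDerivations

variable {ι : Type*} [DecidableEq ι] {χ : ι → ι → R} (S : SkewDerivations χ A)

/-- The skew derivations induced on the quotient by a two-sided ideal that they preserve. -/
def quotient (I : Ideal A) [I.IsTwoSided] (htwist : ∀ i, ∀ x ∈ I, S.twist i x ∈ I)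
    (hL : ∀ i, ∀ x ∈ I, S.derivL i x ∈ I) (hR : ∀ i, ∀ x ∈ I, S.derivR i x ∈ I) :
    SkewDerivations χ (A ⧸ I) where
  gen i := Ideal.Quotient.mk I (S.gen i)
  twist i := Ideal.Quotient.liftₐ I ((Ideal.Quotient.mkₐ R I).comp (S.twist i)) fun x hx =>
    Ideal.Quotient.eq_zero_iff_mem.mpr (htwist i x hx)
  derivL i := quotientEnd I (S.derivL i) (hL i)
  derivR i := quotientEnd I (S.derivR i) (hR i)
  twist_gen i j := congrArg (Ideal.Quotient.mkₐ R I) (S.twist_gen i j)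
  derivL_gen i j := by
    rw [quotientEnd_mk, S.derivL_gen, apply_ite (Ideal.Quotient.mk I), map_one, map_zero]
  derivR_gen i j := by
    rw [quotientEnd_mk, S.derivR_gen, apply_ite (Ideal.Quotient.mk I), map_one, map_zero]
  derivL_mul i x y := by
    obtain ⟨x, rfl⟩ := Ideal.Quotient.mk_surjective x
    obtain ⟨y, rfl⟩ := Ideal.Quotient.mk_surjective y
    exact congrArg (Ideal.Quotient.mk I) (S.derivL_mul i x y)
  derivR_mul i x y := by
    obtain ⟨x, rfl⟩ := Ideal.Quotient.mk_surjective x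
    obtain ⟨y, rfl⟩ := Ideal.Quotient.mk_surjective y
    exact congrArg (Ideal.Quotient.mk I) (S.derivR_mul i x y)
  adjoin_gen := by
    rw [show Set.range (fun i => Ideal.Quotient.mk I (S.gen i)) =
      Ideal.Quotient.mkₐ R I '' Set.range S.gen from Set.range_comp _ _,
      Algebra.adjoin_image, S.adjoin_gen, Algebra.map_top, AlgHom.range_eq_top]
    exact Ideal.Quotient.mkₐ_surjective R I

variable {S} {I : Ideal A} [I.IsTwoSided] {htwist : ∀ i, ∀ x ∈ I, S.twist i x ∈ I}
  {hL : ∀ i, ∀ x ∈ I, S.derivL i x ∈ I} {hR : ∀ i, ∀ x ∈ I, S.derivR i x ∈ I}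

theorem quotient_qAd_pow_mk (i : ι) (n : ℕ) (x : A) :
    ((S.quotient I htwist hL hR).qAd i ^ n) (Ideal.Quotient.mk I x) =
      Ideal.Quotient.mk I ((S.qAd i ^ n) x) := by
  induction n with
  | zero => rfl
  | succ n ih => rw [pow_succ', Module.End.mul_apply, ih, pow_succ', Module.End.mul_apply]; rfl

end SkewDerivations

theorem SkewDerivations.mem_of_derivL_mem_of_derivR_mem {ι 𝕜 A : Type*} [DecidableEq ι] [Field 𝕜]
    [Ring A] [Algebra 𝕜 A] {χ : ι → ι → 𝕜} (S : SkewDerivations χ A) {I : Ideal A} [I.IsTwoSided]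
    (htwist : ∀ i, ∀ x ∈ I, S.twist i x ∈ I) (hL : ∀ i, ∀ x ∈ I, S.derivL i x ∈ I)
    (hR : ∀ i, ∀ x ∈ I, S.derivR i x ∈ I) {i : ι} (hi : χ i i ≠ 0)
    (hgeom : ∀ n, ∑ m ∈ Finset.range (n + 1), χ i i ^ m ≠ 0)
    (hnil : ∀ j, i ≠ j → ∃ n : ℕ, (S.qAd i ^ n) (S.gen j) ∈ I) {x : A} {b : 𝕜}
    (hxL : S.derivL i x ∈ I) (hxR : S.derivR i x ∈ I) (hxtwist : S.twist i x = b • x)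
    (hb : ∀ n : ℕ, b ^ 2 * χ i i ^ n ≠ 1) : x ∈ I := by
  refine Ideal.Quotient.eq_zero_iff_mem.mp <|
    (S.quotient I htwist hL hR).eq_zero_of_derivL_eq_zero_of_derivR_eq_zero hi hgeom
      (fun j hij => ?_) (Ideal.Quotient.eq_zero_iff_mem.mpr hxL)
      (Ideal.Quotient.eq_zero_iff_mem.mpr hxR) (congrArg (Ideal.Quotient.mkₐ 𝕜 I) hxtwist) hb
  obtain ⟨n, hn⟩ := hnil j hij
  exact ⟨n, (quotient_qAd_pow_mk i n _).trans (Ideal.Quotient.eq_zero_iff_mem.mpr hn)⟩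

end Quotient

/-! ### Homogeneous elements and coefficients -/

namespace SkewDerivations

section Coefficients

variable {ι R A : Type*} [DecidableEq ι] [CommRing R] [Ring A] [Algebra R A] {χ : ι → ι → R}
  (S : SkewDerivations χ A)

/-- The monomial `e_{i₁} ⋯ e_{i_k}` of a word `[i₁, …, i_k]`. -/
def word (w : List ι) : A := (w.map S.gen).prod

theorem word_nil : S.word [] = 1 := rfl

theorem word_cons (j : ι) (w : List ι) : S.word (j :: w) = S.gen j * S.word w := List.prod_cons

/-- The homogeneous elements of degree `ν`, where the multiset `ν` stands for `Σ_{i ∈ ν} α_i`. -/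
def homogeneous (ν : Multiset ι) : Submodule R A :=
  Submodule.span R (S.word '' {w | (w : Multiset ι) = ν})

theorem word_mem_homogeneous (w : List ι) : S.word w ∈ S.homogeneous (w : Multiset ι) :=
  Submodule.subset_span ⟨w, rfl, rfl⟩

theorem mem_homogeneous_zero {x : A} : x ∈ S.homogeneous 0 ↔ ∃ c : R, c • 1 = x := by
  have : {w : List ι | (w : Multiset ι) = 0} = {[]} := by ext; simp
  rw [homogeneous, this, Set.image_singleton, word_nil, Submodule.mem_span_singleton]

theorem gen_mul_mem_homogeneous (j : ι) {ν : Multiset ι} {x : A} (hx : x ∈ S.homogeneous ν) :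
    S.gen j * x ∈ S.homogeneous (j ::ₘ ν) := by
  suffices h : S.homogeneous ν ≤ (S.homogeneous (j ::ₘ ν)).comap (LinearMap.mulLeft R (S.gen j))
    from h hx
  refine Submodule.span_le.mpr ?_
  rintro _ ⟨w, rfl, rfl⟩
  simpa [word_cons] using S.word_mem_homogeneous (j :: w)

theorem iSup_homogeneous : ⨆ ν, S.homogeneous ν = ⊤ := by
  refine Submodule.eq_top_iff'.mpr (S.mem_of_gen_mul_mem ?_ fun j x hx => ?_)
  · exact Submodule.mem_iSup_of_mem 0 (S.mem_homogeneous_zero.mpr ⟨1, one_smul R 1⟩)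
  · suffices h : ⨆ ν, S.homogeneous ν ≤
        (⨆ ν, S.homogeneous ν).comap (LinearMap.mulLeft R (S.gen j)) from h hx
    exact iSup_le fun ν y hy =>
      Submodule.mem_iSup_of_mem (j ::ₘ ν) (S.gen_mul_mem_homogeneous j hy)

theorem twist_word (i : ι) (w : List ι) : S.twist i (S.word w) = (w.map (χ i)).prod • S.word w := by
  induction w with
  | nil => simp [word_nil]
  | cons j w ih =>
    rw [word_cons, S.twist_gen_mul, ih, mul_smul_comm, smul_smul, List.map_cons, List.prod_cons]

theorem twist_of_mem_homogeneous (i : ι) {ν : Multiset ι} {x : A} (hx : x ∈ S.homogeneous ν) :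
    S.twist i x = (ν.map (χ i)).prod • x := by
  suffices h : S.homogeneous ν ≤
      LinearMap.eqLocus (S.twist i).toLinearMap ((ν.map (χ i)).prod • LinearMap.id) from h hx
  refine Submodule.span_le.mpr ?_
  rintro _ ⟨w, rfl, rfl⟩
  simp [twist_word]

theorem map_word_mem_span {i : ι} {f : A →ₗ[R] A} (map_one : f 1 = 0)
    (map_gen_mul_word : ∀ j w, ∃ c c' : R, f (S.gen j * S.word w) =
      (if i = j then c • S.word w else 0) + c' • (S.gen j * f (S.word w))) (w : List ι) :
    f (S.word w) ∈ Submodule.span R (S.word '' {w' | (i :: w').Perm w}) := by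
  induction w with
  | nil => rw [word_nil, map_one]; exact zero_mem _
  | cons j w ih =>
    obtain ⟨c, c', h⟩ := map_gen_mul_word j w
    have gen_mul_mem : Submodule.span R (S.word '' {w' | (i :: w').Perm w}) ≤
        (Submodule.span R (S.word '' {w' | (i :: w').Perm (j :: w)})).comap
          (LinearMap.mulLeft R (S.gen j)) := by
      refine Submodule.span_le.mpr ?_
      rintro _ ⟨w', hw', rfl⟩
      exact Submodule.subset_span
        ⟨j :: w', (List.Perm.swap j i w').trans (hw'.cons j), S.word_cons j w'⟩
    rw [word_cons, h]
    refine add_mem ?_ (Submodule.smul_mem _ _ (gen_mul_mem ih))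
    split_ifs with hij
    · exact Submodule.smul_mem _ _ (Submodule.subset_span ⟨w, by simp [hij], rfl⟩)
    · exact zero_mem _

theorem map_eq_zero_or_mem_homogeneous {i : ι} {f : A →ₗ[R] A} (map_one : f 1 = 0)
    (map_gen_mul_word : ∀ j w, ∃ c c' : R, f (S.gen j * S.word w) =
      (if i = j then c • S.word w else 0) + c' • (S.gen j * f (S.word w)))
    {ν : Multiset ι} {x : A} (hx : x ∈ S.homogeneous ν) :
    f x = 0 ∨ ∃ ν', ν = i ::ₘ ν' ∧ f x ∈ S.homogeneous ν' := by
  by_cases hi : i ∈ ν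
  · obtain ⟨ν', rfl⟩ := Multiset.exists_cons_of_mem hi
    suffices h : S.homogeneous (i ::ₘ ν') ≤ (S.homogeneous ν').comap f from Or.inr ⟨ν', rfl, h hx⟩
    refine Submodule.span_le.mpr ?_
    rintro _ ⟨w, hw, rfl⟩
    refine Submodule.span_mono (Set.image_mono fun w' hw' => ?_)
      (S.map_word_mem_span map_one map_gen_mul_word w)
    exact (Multiset.cons_inj_right i).mp ((Multiset.coe_eq_coe.mpr hw').trans hw)
  · suffices h : S.homogeneous ν ≤ LinearMap.ker f from Or.inl (h hx)
    refine Submodule.span_le.mpr ?_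
    rintro _ ⟨w, rfl, rfl⟩
    have no_lower : {w' : List ι | (i :: w').Perm w} = ∅ :=
      Set.eq_empty_of_forall_notMem fun w' hw' => hi (hw'.subset List.mem_cons_self)
    simpa [no_lower] using S.map_word_mem_span map_one map_gen_mul_word w

theorem derivL_mem_homogeneous (i : ι) {ν : Multiset ι} {x : A} (hx : x ∈ S.homogeneous ν) :
    S.derivL i x = 0 ∨ ∃ ν', ν = i ::ₘ ν' ∧ S.derivL i x ∈ S.homogeneous ν' :=
  S.map_eq_zero_or_mem_homogeneous (S.derivL_one i)
    (fun j w => ⟨1, χ i j, by rw [S.derivL_gen_mul, one_smul]⟩) hx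

theorem derivR_mem_homogeneous (i : ι) {ν : Multiset ι} {x : A} (hx : x ∈ S.homogeneous ν) :
    S.derivR i x = 0 ∨ ∃ ν', ν = i ::ₘ ν' ∧ S.derivR i x ∈ S.homogeneous ν' :=
  S.map_eq_zero_or_mem_homogeneous (S.derivR_one i)
    (fun j w => ⟨(w.map (χ i)).prod, 1, by
      rw [S.derivR_gen_mul, S.twist_word, one_smul, add_comm]⟩) hx

variable (ε : A →ₐ[R] R)

/-- The functional `ε ∘ derivL i₁ ∘ ⋯ ∘ derivL i_k` of a word `[i₁, …, i_k]`. On the free algebra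
it computes the coefficient of this word in the image under `Ξ`. -/
def coeff (w : List ι) : A →ₗ[R] R := ε.toLinearMap ∘ₗ (w.map S.derivL).prod

theorem coeff_nil (x : A) : S.coeff ε [] x = ε x := rfl

theorem coeff_append_singleton (w : List ι) (i : ι) (x : A) :
    S.coeff ε (w ++ [i]) x = S.coeff ε w (S.derivL i x) := by
  simp [coeff]

/-- The elements all of whose coefficients vanish; on the free algebra, the kernel of `Ξ`. -/
def radical : Submodule R A := ⨅ w, LinearMap.ker (S.coeff ε w)

variable {S ε}

theorem mem_radical {x : A} : x ∈ S.radical ε ↔ ∀ w, S.coeff ε w x = 0 := by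
  simp [radical]

theorem derivL_mem_radical (i : ι) {x : A} (hx : x ∈ S.radical ε) : S.derivL i x ∈ S.radical ε :=
  mem_radical.mpr fun w => by rw [← coeff_append_singleton, mem_radical.mp hx]

theorem mem_radical_of_mem_ideal {I : Ideal A} (hL : ∀ i, ∀ x ∈ I, S.derivL i x ∈ I)
    (hε : ∀ x ∈ I, ε x = 0) {x : A} (hx : x ∈ I) : x ∈ S.radical ε := by
  refine mem_radical.mpr fun w => ?_
  induction w using List.reverseRecOn generalizing x with
  | nil => exact hε x hx
  | append_singleton w i ih => rw [coeff_append_singleton]; exact ih (hL i x hx)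

variable (hε : ∀ i, ε (S.gen i) = 0)
include hε

theorem counit_derivR (i : ι) (x : A) : ε (S.derivR i x) = ε (S.derivL i x) := by
  have counit_twist : ε.comp (S.twist i) = ε := by
    refine AlgHom.ext_of_adjoin_eq_top S.adjoin_gen ?_
    rintro _ ⟨j, rfl⟩
    simp [S.twist_gen, hε]
  suffices h : ε.toLinearMap ∘ₗ S.derivR i = ε.toLinearMap ∘ₗ S.derivL i from
    DFunLike.congr_fun h x
  refine S.linearMap_ext (by simp [S.derivL_one, S.derivR_one]) fun j y _ => ?_
  have : ε (S.twist i y) = ε y := DFunLike.congr_fun counit_twist y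
  simp [S.derivL_gen_mul, S.derivR_gen_mul, hε, apply_ite ε, this]

theorem coeff_derivR (hχ : ∀ i j, χ i j = χ j i) (w : List ι) (i : ι) (x : A) :
    S.coeff ε w (S.derivR i x) = S.coeff ε (i :: w) x := by
  have hcomm : Commute (S.derivR i) (w.map S.derivL).prod := by
    refine Commute.list_prod_right _ _ fun f hf => ?_
    obtain ⟨j, -, rfl⟩ := List.mem_map.mp hf
    exact LinearMap.ext fun y => (S.derivL_derivR hχ j i y).symm
  calc ε ((w.map S.derivL).prod (S.derivR i x))
      = ε (S.derivR i ((w.map S.derivL).prod x)) := by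
        rw [← Module.End.mul_apply, ← hcomm.eq, Module.End.mul_apply]
    _ = ε (S.derivL i ((w.map S.derivL).prod x)) := counit_derivR hε i _
    _ = S.coeff ε (i :: w) x := by simp [coeff]

theorem derivR_mem_radical (hχ : ∀ i j, χ i j = χ j i) (i : ι) {x : A} (hx : x ∈ S.radical ε) :
    S.derivR i x ∈ S.radical ε :=
  mem_radical.mpr fun w => by rw [coeff_derivR hε hχ, mem_radical.mp hx]

theorem coeff_eq_zero_of_mem_homogeneous {ν : Multiset ι} {w : List ι} (hw : (w : Multiset ι) ≠ ν)
    {x : A} (hx : x ∈ S.homogeneous ν) : S.coeff ε w x = 0 := by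
  induction w using List.reverseRecOn generalizing ν x with
  | nil =>
    suffices h : S.homogeneous ν ≤ LinearMap.ker ε.toLinearMap from h hx
    refine Submodule.span_le.mpr ?_
    rintro _ ⟨_ | ⟨j, w⟩, rfl, rfl⟩
    · exact absurd rfl hw
    · simp [word_cons, hε]
  | append_singleton w i ih =>
    rw [coeff_append_singleton]
    obtain h | ⟨ν', rfl, h⟩ := S.derivL_mem_homogeneous i hx
    · rw [h, map_zero]
    · refine ih (fun hw' => hw ?_) h
      rw [← hw', Multiset.cons_coe, Multiset.coe_eq_coe]
      exact List.perm_append_singleton i w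

theorem radical_le_of_homogeneous {P : Submodule R A}
    (hP : ∀ ν, ∀ x ∈ S.homogeneous ν, x ∈ S.radical ε → x ∈ P) : S.radical ε ≤ P := by
  intro x hx
  have hx' : x ∈ ⨆ ν, S.homogeneous ν := S.iSup_homogeneous ▸ Submodule.mem_top
  obtain ⟨f, hf, rfl⟩ := (Submodule.mem_iSup_iff_exists_finsupp _ _).mp hx'
  refine sum_mem fun ν _ => hP ν (f ν) (hf ν) (mem_radical.mpr fun w => ?_)
  by_cases hw : (w : Multiset ι) = ν
  · have h := mem_radical.mp hx w
    rw [Finsupp.sum, map_sum, Finset.sum_eq_single ν] at h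
    · exact h
    · exact fun μ _ hμ => coeff_eq_zero_of_mem_homogeneous hε (hw.trans_ne hμ.symm) (hf μ)
    · exact fun hν => by rw [Finsupp.notMem_support_iff.mp hν, map_zero]
  · exact coeff_eq_zero_of_mem_homogeneous hε hw (hf ν)

end Coefficients

/-! ### The Serre ideal -/

section Serre

variable {ι R A : Type*} [DecidableEq ι] [CommRing R] [Ring A] [Algebra R A] {χ : ι → ι → R}
  (S : SkewDerivations χ A)

/-- The two-sided ideal generated by the elements `(ad e_i)^{N i j + 1} e_j` with `i ≠ j`. -/
def serreIdeal (N : ι → ι → ℕ) : TwoSidedIdeal A :=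
  TwoSidedIdeal.span {x | ∃ i j, i ≠ j ∧ x = (S.qAd i ^ (N i j + 1)) (S.gen j)}

variable {S} {N : ι → ι → ℕ}

theorem qAd_pow_gen_mem_serreIdeal {i j : ι} (hij : i ≠ j) :
    (S.qAd i ^ (N i j + 1)) (S.gen j) ∈ S.serreIdeal N :=
  TwoSidedIdeal.subset_span ⟨i, j, hij, rfl⟩

theorem smul_mem_serreIdeal (c : R) {x : A} (hx : x ∈ S.serreIdeal N) : c • x ∈ S.serreIdeal N := by
  rw [Algebra.smul_def]
  exact TwoSidedIdeal.mul_mem_left _ _ _ hx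

theorem twist_mem_serreIdeal (l : ι) {x : A} (hx : x ∈ S.serreIdeal N) :
    S.twist l x ∈ S.serreIdeal N := by
  suffices h : S.serreIdeal N ≤ (S.serreIdeal N).comap (S.twist l) from
    (TwoSidedIdeal.mem_comap _).mp (h hx)
  refine TwoSidedIdeal.span_le.mpr ?_
  rintro _ ⟨i, j, hij, rfl⟩
  rw [SetLike.mem_coe, TwoSidedIdeal.mem_comap, S.twist_qAd_pow, S.twist_gen, map_smul]
  exact smul_mem_serreIdeal _ (smul_mem_serreIdeal _ (qAd_pow_gen_mem_serreIdeal hij))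

theorem counit_eq_zero_of_mem_serreIdeal {ε : A →ₐ[R] R} (hε : ∀ i, ε (S.gen i) = 0) {x : A}
    (hx : x ∈ S.serreIdeal N) : ε x = 0 := by
  suffices h : S.serreIdeal N ≤ TwoSidedIdeal.ker ε from TwoSidedIdeal.mem_ker _ |>.mp (h hx)
  refine TwoSidedIdeal.span_le.mpr ?_
  rintro _ ⟨i, j, -, rfl⟩
  simp [TwoSidedIdeal.mem_ker, pow_succ', qAd_apply, hε]

variable (hχ : ∀ i j, χ i j = χ j i) (hN : ∀ i j, i ≠ j → χ i j ^ 2 * χ i i ^ N i j = 1)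
include hχ hN

theorem derivL_mem_serreIdeal (l : ι) {x : A} (hx : x ∈ S.serreIdeal N) :
    S.derivL l x ∈ S.serreIdeal N := by
  induction hx using TwoSidedIdeal.span_induction with
  | mem x hx =>
    obtain ⟨i, j, hij, rfl⟩ := hx
    rw [S.derivL_qAd_pow_gen hχ hij (hN i j hij)]
    exact zero_mem _
  | zero => rw [map_zero]; exact zero_mem _
  | add x y _ _ hx hy => rw [map_add]; exact add_mem hx hy
  | neg x _ hx => rw [map_neg]; exact neg_mem hx
  | left_absorb a x hxI hx =>
    rw [S.derivL_mul]
    exact add_mem (TwoSidedIdeal.mul_mem_left _ _ _ hxI) (TwoSidedIdeal.mul_mem_left _ _ _ hx)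
  | right_absorb a x hxI hx =>
    rw [S.derivL_mul]
    exact add_mem (TwoSidedIdeal.mul_mem_right _ _ _ hx)
      (TwoSidedIdeal.mul_mem_right _ _ _ (twist_mem_serreIdeal l hxI))

theorem derivR_mem_serreIdeal (l : ι) {x : A} (hx : x ∈ S.serreIdeal N) :
    S.derivR l x ∈ S.serreIdeal N := by
  induction hx using TwoSidedIdeal.span_induction with
  | mem x hx =>
    obtain ⟨i, j, hij, rfl⟩ := hx
    rw [S.derivR_qAd_pow_gen hχ hij (hN i j hij)]
    exact zero_mem _
  | zero => rw [map_zero]; exact zero_mem _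
  | add x y _ _ hx hy => rw [map_add]; exact add_mem hx hy
  | neg x _ hx => rw [map_neg]; exact neg_mem hx
  | left_absorb a x hxI hx =>
    rw [S.derivR_mul]
    exact add_mem (TwoSidedIdeal.mul_mem_left _ _ _ hx)
      (TwoSidedIdeal.mul_mem_left _ _ _ (twist_mem_serreIdeal l hxI))
  | right_absorb a x hxI hx =>
    rw [S.derivR_mul]
    exact add_mem (TwoSidedIdeal.mul_mem_right _ _ _ hxI) (TwoSidedIdeal.mul_mem_right _ _ _ hx)

end Serre

section Field

variable {ι 𝕜 A : Type*} [DecidableEq ι] [Field 𝕜] [Ring A] [Algebra 𝕜 A] {χ : ι → ι → 𝕜}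
  {S : SkewDerivations χ A} {ε : A →ₐ[𝕜] 𝕜}

theorem radical_le_of_stable_ideal (hε : ∀ i, ε (S.gen i) = 0) (hχ : ∀ i j, χ i j = χ j i)
    (hne : ∀ i, χ i i ≠ 0) (hgeom : ∀ i n, ∑ m ∈ Finset.range (n + 1), χ i i ^ m ≠ 0)
    (hpos : ∀ ν : Multiset ι, ν ≠ 0 → ∃ i, ∀ n : ℕ, (ν.map (χ i)).prod ^ 2 * χ i i ^ n ≠ 1)
    {I : Ideal A} [I.IsTwoSided] (htwist : ∀ i, ∀ x ∈ I, S.twist i x ∈ I)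
    (hL : ∀ i, ∀ x ∈ I, S.derivL i x ∈ I) (hR : ∀ i, ∀ x ∈ I, S.derivR i x ∈ I)
    (hnil : ∀ i j, i ≠ j → ∃ n : ℕ, (S.qAd i ^ n) (S.gen j) ∈ I) :
    S.radical ε ≤ I.restrictScalars 𝕜 := by
  refine radical_le_of_homogeneous hε fun ν => ?_
  induction ν using Multiset.strongInductionOn with
  | ih ν ih =>
    intro x hx hrad
    rcases eq_or_ne ν 0 with rfl | hν
    · obtain ⟨c, rfl⟩ := S.mem_homogeneous_zero.mp hx
      have hc : c = 0 := by simpa [coeff_nil] using mem_radical.mp hrad []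
      rw [hc, zero_smul]
      exact zero_mem _
    obtain ⟨i, hi⟩ := hpos ν hν
    have mem_of_lower {y : A} (hy : y ∈ S.radical ε)
        (h : y = 0 ∨ ∃ ν', ν = i ::ₘ ν' ∧ y ∈ S.homogeneous ν') : y ∈ I := by
      obtain rfl | ⟨ν', rfl, hy'⟩ := h
      · exact zero_mem _
      · exact ih ν' (Multiset.lt_cons_self ν' i) y hy' hy
    exact S.mem_of_derivL_mem_of_derivR_mem htwist hL hR (hne i) (hgeom i) (hnil i)
      (mem_of_lower (derivL_mem_radical i hrad) (S.derivL_mem_homogeneous i hx))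
      (mem_of_lower (derivR_mem_radical hε hχ i hrad) (S.derivR_mem_homogeneous i hx))
      (S.twist_of_mem_homogeneous i hx) hi

theorem mem_radical_iff_mem_serreIdeal {N : ι → ι → ℕ} (hε : ∀ i, ε (S.gen i) = 0)
    (hχ : ∀ i j, χ i j = χ j i) (hN : ∀ i j, i ≠ j → χ i j ^ 2 * χ i i ^ N i j = 1)
    (hne : ∀ i, χ i i ≠ 0) (hgeom : ∀ i n, ∑ m ∈ Finset.range (n + 1), χ i i ^ m ≠ 0)
    (hpos : ∀ ν : Multiset ι, ν ≠ 0 → ∃ i, ∀ n : ℕ, (ν.map (χ i)).prod ^ 2 * χ i i ^ n ≠ 1)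
    {x : A} : x ∈ S.radical ε ↔ x ∈ S.serreIdeal N := by
  have hL : ∀ i, ∀ y ∈ (S.serreIdeal N).asIdeal, S.derivL i y ∈ (S.serreIdeal N).asIdeal := by
    simpa only [TwoSidedIdeal.mem_asIdeal] using fun i y => derivL_mem_serreIdeal hχ hN i
  rw [← TwoSidedIdeal.mem_asIdeal]
  constructor
  · refine fun hx => radical_le_of_stable_ideal hε hχ hne hgeom hpos ?_ hL ?_
      (fun i j hij => ⟨_, TwoSidedIdeal.mem_asIdeal.mpr (qAd_pow_gen_mem_serreIdeal hij)⟩) hx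
    · simpa only [TwoSidedIdeal.mem_asIdeal] using fun i y => twist_mem_serreIdeal i
    · simpa only [TwoSidedIdeal.mem_asIdeal] using fun i y => derivR_mem_serreIdeal hχ hN i
  · exact mem_radical_of_mem_ideal hL fun y hy =>
      counit_eq_zero_of_mem_serreIdeal hε (TwoSidedIdeal.mem_asIdeal.mp hy)

end Field

end SkewDerivations

/-! ### Skew derivations of the free algebra -/

namespace SkewDerivations

section Free

variable {ι R : Type*} [CommRing R]

/- Skew derivations are the upper right entries of homomorphisms to triangular matrices, which
freeness allows to prescribe on generators. -/
theorem exists_skewDerivation_freeAlgebra (f g : FreeAlgebra R ι →ₐ[R] FreeAlgebra R ι)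
    (v : ι → FreeAlgebra R ι) : ∃ D : FreeAlgebra R ι →ₗ[R] FreeAlgebra R ι,
      (∀ j, D (FreeAlgebra.ι R j) = v j) ∧ ∀ x y, D (x * y) = f x * D y + D x * g y := by
  let T : FreeAlgebra R ι →ₐ[R] Matrix (Fin 2) (Fin 2) (FreeAlgebra R ι) :=
    FreeAlgebra.lift R fun j => !![f (FreeAlgebra.ι R j), v j; 0, g (FreeAlgebra.ι R j)]
  have hT (x : FreeAlgebra R ι) : T x 0 0 = f x ∧ T x 1 0 = 0 ∧ T x 1 1 = g x := by
    induction x using FreeAlgebra.induction with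
    | grade0 c => simp [Matrix.algebraMap_matrix_apply]
    | grade1 j => simp [T]
    | mul x y hx hy => simp [Matrix.mul_apply, Fin.sum_univ_two, hx, hy]
    | add x y hx hy => simp [hx, hy]
  refine ⟨Matrix.entryLinearMap R _ 0 1 ∘ₗ T.toLinearMap, fun j => by simp [T], fun x y => ?_⟩
  simp [Matrix.mul_apply, Fin.sum_univ_two, hT]

variable [DecidableEq ι] (χ : ι → ι → R)

/-- The skew derivations of the free algebra with braiding matrix `χ`. -/
def free : SkewDerivations χ (FreeAlgebra R ι) :=
  let twist (i : ι) : FreeAlgebra R ι →ₐ[R] FreeAlgebra R ι :=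
    FreeAlgebra.lift R fun j => χ i j • FreeAlgebra.ι R j
  have hL (i : ι) := exists_skewDerivation_freeAlgebra (twist i) (AlgHom.id R _)
    fun j => if i = j then 1 else 0
  have hR (i : ι) := exists_skewDerivation_freeAlgebra (AlgHom.id R _) (twist i)
    fun j => if i = j then 1 else 0
  { gen := FreeAlgebra.ι R
    twist := twist
    derivL i := (hL i).choose
    derivR i := (hR i).choose
    twist_gen _ j := FreeAlgebra.lift_ι_apply _ j
    derivL_gen i := (hL i).choose_spec.1
    derivR_gen i := (hR i).choose_spec.1
    derivL_mul i x y := ((hL i).choose_spec.2 x y).trans (add_comm _ _)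
    derivR_mul i := (hR i).choose_spec.2
    adjoin_gen := FreeAlgebra.adjoin_range_ι R ι }

end Free

end SkewDerivations

/-! ### The `q`-Serre elements as iterated `q`-commutators -/

namespace SkewDerivations

variable {ι R A : Type*} [DecidableEq ι] [CommRing R] [Ring A] [Algebra R A] {χ : ι → ι → R}
  (S : SkewDerivations χ A)

theorem qAd_gen_pow_mul_gen_mul_gen_pow (i j : ι) (k l : ℕ) :
    S.qAd i (S.gen i ^ k * S.gen j * S.gen i ^ l) =
      S.gen i ^ (k + 1) * S.gen j * S.gen i ^ l -
        (χ i j * χ i i ^ (k + l)) • (S.gen i ^ k * S.gen j * S.gen i ^ (l + 1)) := by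
  rw [qAd_apply, map_mul, map_mul, twist_gen_pow, twist_gen_pow, S.twist_gen]
  simp only [smul_mul_assoc, mul_smul_comm, smul_smul, mul_assoc, ← pow_succ, pow_succ' _ k]
  congr 2
  ring

theorem qAd_pow_gen_eq_sum (i j : ι) {c : ℕ → ℕ → R} (hone : c 0 0 = 1)
    (hzero : ∀ n, c (n + 1) 0 = -(χ i j * χ i i ^ n) * c n 0)
    (hsucc : ∀ n k, c (n + 1) (k + 1) = c n k - χ i j * χ i i ^ n * c n (k + 1))
    (htop : ∀ n, c n (n + 1) = 0) (n : ℕ) :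
    (S.qAd i ^ n) (S.gen j) =
      ∑ k ∈ Finset.range (n + 1), c n k • (S.gen i ^ k * S.gen j * S.gen i ^ (n - k)) := by
  induction n with
  | zero => simp [hone]
  | succ n ih =>
    let m (k : ℕ) : A := S.gen i ^ k * S.gen j * S.gen i ^ (n + 1 - k)
    have qAd_term : ∀ k ∈ Finset.range (n + 1),
        S.qAd i (c n k • (S.gen i ^ k * S.gen j * S.gen i ^ (n - k))) =
          c n k • m (k + 1) - (χ i j * χ i i ^ n * c n k) • m k := by
      intro k hk
      have hkn : k ≤ n := Nat.lt_succ_iff.mp (Finset.mem_range.mp hk)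
      rw [map_smul, qAd_gen_pow_mul_gen_mul_gen_pow, smul_sub, smul_smul, mul_comm (c n k),
        Nat.add_sub_cancel' hkn, ← Nat.sub_add_comm hkn, ← Nat.add_sub_add_right n 1 k]
    have extend_sum : ∑ k ∈ Finset.range (n + 1), (χ i j * χ i i ^ n * c n k) • m k =
        ∑ k ∈ Finset.range (n + 2), (χ i j * χ i i ^ n * c n k) • m k := by
      rw [Finset.sum_range_succ _ (n + 1), htop, mul_zero, zero_smul, add_zero]
    rw [pow_succ', Module.End.mul_apply, ih, map_sum, Finset.sum_congr rfl qAd_term,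
      Finset.sum_sub_distrib, extend_sum, Finset.sum_range_succ' _ (n + 1),
      Finset.sum_range_succ' _ (n + 1), ← sub_sub, ← Finset.sum_sub_distrib, hzero, neg_mul,
      neg_smul, sub_eq_add_neg]
    simp only [hsucc, sub_smul, m]

end SkewDerivations

theorem qq_ne_zero : qq ≠ 0 := RatFunc.X_ne_zero

theorem intDegree_qq_zpow (n : ℤ) : (qq ^ n).intDegree = n := by
  have intDegree_zpow_add_one (m : ℤ) : (qq ^ (m + 1)).intDegree = (qq ^ m).intDegree + 1 := by
    rw [zpow_add_one₀ qq_ne_zero, RatFunc.intDegree_mul (zpow_ne_zero m qq_ne_zero) qq_ne_zero,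
      RatFunc.intDegree_X]
  induction n with
  | zero => simp
  | succ n ih => rw [intDegree_zpow_add_one, ih]
  | pred n ih =>
    have h := intDegree_zpow_add_one (-n - 1)
    rw [sub_add_cancel, ih] at h
    omega

theorem qq_zpow_ne_one {n : ℤ} (hn : n ≠ 0) : qq ^ n ≠ 1 := fun h =>
  hn (by rw [← intDegree_qq_zpow n, h, RatFunc.intDegree_one])

theorem qq_zpow_sub_zpow_neg_ne_zero {n : ℤ} (hn : n ≠ 0) : qq ^ n - qq ^ (-n) ≠ 0 := by
  intro h
  refine qq_zpow_ne_one (n := n + n) (by omega) ?_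
  rw [zpow_add₀ qq_ne_zero]
  nth_rw 1 [sub_eq_zero.mp h]
  rw [← zpow_add₀ qq_ne_zero, neg_add_cancel, zpow_zero]

theorem qInt_ne_zero {d n : ℤ} (hd : d ≠ 0) (hn : n ≠ 0) : qInt d n ≠ 0 :=
  div_ne_zero (qq_zpow_sub_zpow_neg_ne_zero (mul_ne_zero hd hn)) (qq_zpow_sub_zpow_neg_ne_zero hd)

theorem qInt_add (d m n : ℤ) :
    qInt d (m + n) = qq ^ (d * m) * qInt d n + qq ^ (-(d * n)) * qInt d m := by
  simp only [qInt, mul_add, neg_add, zpow_add₀ qq_ne_zero]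
  ring

theorem qBinom_zero_right (d : ℤ) (n : ℕ) : qBinom d n 0 = 1 := by simp [qBinom]

theorem qBinom_self_succ (d : ℤ) (n : ℕ) : qBinom d n (n + 1) = 0 := by
  simp [qBinom, Finset.prod_range_succ, qInt]

theorem qBinom_succ_succ {d : ℤ} (hd : d ≠ 0) (n k : ℕ) :
    qBinom d (n + 1) (k + 1) = qq ^ (d * ((n : ℤ) - k)) * qBinom d n k
      + qq ^ (-(d * ((k : ℤ) + 1))) * qBinom d n (k + 1) := by
  have hprod : ∏ t ∈ Finset.range k, qInt d ((t : ℤ) + 1) ≠ 0 :=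
    Finset.prod_ne_zero_iff.mpr fun t _ => qInt_ne_zero hd (by positivity)
  have hlast : qInt d ((k : ℤ) + 1) ≠ 0 := qInt_ne_zero hd (by positivity)
  have hnumerator : ∏ t ∈ Finset.range (k + 1), qInt d (((n + 1 : ℕ) : ℤ) - t) =
      (∏ t ∈ Finset.range k, qInt d ((n : ℤ) - t)) * qInt d (n - k + (k + 1)) := by
    rw [Finset.prod_range_succ']
    congr 1
    · exact Finset.prod_congr rfl fun t _ => by congr 1; push_cast; ring
    · congr 1; push_cast; ring
  rw [qBinom, hnumerator, qInt_add, qBinom, qBinom, Finset.prod_range_succ,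
    Finset.prod_range_succ]
  field_simp

/-- The coefficient of `w_i^k w_j w_i^(n-k)` in the `n`-fold `q`-commutator of `w_i` with `w_j`,
when `(α_i, α_i) = 2 d` and `(α_i, α_j) = s`. -/
def qAdCoeff (d s : ℤ) (n k : ℕ) : K :=
  (-1) ^ (n + k) * qq ^ (((n : ℤ) - k) * (-s - d * ((n : ℤ) - 1))) * qBinom d n k

theorem qAdCoeff_succ_zero (d s : ℤ) (n : ℕ) :
    qAdCoeff d s (n + 1) 0 = -(qq ^ (-s) * (qq ^ (-(d * 2))) ^ n) * qAdCoeff d s n 0 := by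
  have hexp : qq ^ (((n + 1 : ℕ) - (0 : ℕ) : ℤ) * (-s - d * ((n + 1 : ℕ) - 1))) =
      qq ^ (-s) * qq ^ (-(d * 2) * (n : ℤ)) * qq ^ (((n : ℤ) - (0 : ℕ)) * (-s - d * (n - 1))) := by
    rw [← zpow_add₀ qq_ne_zero, ← zpow_add₀ qq_ne_zero]
    congr 1
    push_cast
    ring
  rw [qAdCoeff, qAdCoeff, hexp, ← zpow_natCast (qq ^ (-(d * 2))), ← zpow_mul, qBinom_zero_right,
    qBinom_zero_right]
  ring

theorem qAdCoeff_succ_succ {d : ℤ} (hd : d ≠ 0) (s : ℤ) (n k : ℕ) :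
    qAdCoeff d s (n + 1) (k + 1) = qAdCoeff d s n k -
      qq ^ (-s) * (qq ^ (-(d * 2))) ^ n * qAdCoeff d s n (k + 1) := by
  let e : ℤ := ((n + 1 : ℕ) - (k + 1 : ℕ)) * (-s - d * ((n + 1 : ℕ) - 1))
  have hexp : qq ^ (((n : ℤ) - k) * (-s - d * (n - 1))) = qq ^ e * qq ^ (d * ((n : ℤ) - k)) := by
    rw [← zpow_add₀ qq_ne_zero]
    congr 1
    simp only [e]
    push_cast
    ring
  have hexp_succ : qq ^ (-s) * qq ^ (-(d * 2) * (n : ℤ)) *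
      qq ^ (((n : ℤ) - (k + 1 : ℕ)) * (-s - d * (n - 1))) =
        qq ^ e * qq ^ (-(d * ((k : ℤ) + 1))) := by
    rw [← zpow_add₀ qq_ne_zero, ← zpow_add₀ qq_ne_zero, ← zpow_add₀ qq_ne_zero]
    congr 1
    simp only [e]
    push_cast
    ring
  rw [qAdCoeff, qAdCoeff, qAdCoeff, qBinom_succ_succ hd, hexp, ← zpow_natCast (qq ^ (-(d * 2))),
    ← zpow_mul]
  linear_combination (-(-1) ^ (n + k) * qBinom d n (k + 1)) * hexp_succ

theorem qAdCoeff_self_succ (d s : ℤ) (n : ℕ) : qAdCoeff d s n (n + 1) = 0 := by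
  rw [qAdCoeff, qBinom_self_succ, mul_zero]

theorem SkewDerivations.qAd_pow_gen_eq_smul_sum_qBinom {ι A : Type*} [DecidableEq ι] [Ring A]
    [Algebra K A] {χ : ι → ι → K} (S : SkewDerivations χ A) {i j : ι} {d : ℤ} {n : ℕ}
    (hd : d ≠ 0) (hii : χ i i = qq ^ (-(d * 2))) (hij : χ i j = qq ^ (-(d * (1 - n)))) :
    (S.qAd i ^ n) (S.gen j) = (-1 : K) ^ n • ∑ k ∈ Finset.range (n + 1),
      ((-1) ^ k * qBinom d n k) • (S.gen i ^ k * S.gen j * S.gen i ^ (n - k)) := by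
  rw [S.qAd_pow_gen_eq_sum i j (c := qAdCoeff d (d * (1 - n)))
    (by simp [qAdCoeff, qBinom_zero_right]) (by simpa only [hii, hij] using qAdCoeff_succ_zero d _)
    (by simpa only [hii, hij] using qAdCoeff_succ_succ hd _) (qAdCoeff_self_succ d _),
    Finset.smul_sum]
  refine Finset.sum_congr rfl fun k _ => ?_
  have hexp : ((n : ℤ) - k) * (-(d * (1 - n)) - d * (n - 1)) = 0 := by ring
  rw [smul_smul, qAdCoeff, hexp, zpow_zero, mul_one, pow_add, mul_assoc]

/-! ### The `q`-shuffle algebra -/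

section Shuffle

variable (p : Fin r → Fin r → ℤ)

/-- The linear endomorphism of `F` sending `w·w_i` to `w` and killing the words that do not end
in `w_i`. -/
def dropLast (i : Fin r) : FA r →ₗ[K] FA r :=
  Finsupp.lcomapDomain (fun w : Word r => w ++ [i]) (List.append_left_injective [i])

theorem dropLast_apply (i : Fin r) (f : FA r) (w : Word r) : dropLast i f w = f (w ++ [i]) := rfl

theorem dropLast_single_nil (i : Fin r) (c : K) : dropLast i (Finsupp.single [] c) = 0 := by
  ext w; simp [dropLast_apply]

theorem dropLast_mapDomain_append (i j : Fin r) (f : FA r) :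
    dropLast i (Finsupp.mapDomain (fun u => u ++ [j]) f) = if i = j then f else 0 := by
  ext w
  rw [dropLast_apply]
  split_ifs with hij
  · subst hij
    exact Finsupp.mapDomain_apply (List.append_left_injective [i]) f w
  · exact Finsupp.mapDomain_of_notMem_range _ _ (by simpa using fun h => hij h.symm)

theorem dropLast_single_append (i j : Fin r) (w : Word r) (c : K) :
    dropLast i (Finsupp.single (w ++ [j]) c) = if i = j then Finsupp.single w c else 0 := by
  rw [← dropLast_mapDomain_append, Finsupp.mapDomain_single]

theorem pairW_singleton (w : Word r) (i : Fin r) : pairW p w [i] = (w.map fun j => p j i).sum := by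
  simp [pairW]

/-- The diagonal operator `w ↦ q^{-(|w|, α_i)} w` on `F`. -/
def weightTwist (i : Fin r) : FA r →ₗ[K] FA r :=
  Finsupp.linearCombination K fun w => Finsupp.single w (qq ^ (-pairW p w [i]))

theorem weightTwist_single (i : Fin r) (w : Word r) :
    weightTwist p i (Finsupp.single w 1) = qq ^ (-pairW p w [i]) • Finsupp.single w 1 := by
  simp [weightTwist]

theorem weightTwist_apply (i : Fin r) (f : FA r) (w : Word r) :
    weightTwist p i f w = qq ^ (-pairW p w [i]) * f w := by
  induction f using Finsupp.induction_linear with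
  | zero => simp
  | add f g hf hg => simp [hf, hg, mul_add]
  | single x c =>
    rcases eq_or_ne x w with rfl | hxw
    · simp [weightTwist, mul_comm]
    · simp [weightTwist, hxw]

theorem weightTwist_comm (i j : Fin r) (f : FA r) :
    weightTwist p i (weightTwist p j f) = weightTwist p j (weightTwist p i f) := by
  ext w
  simp only [weightTwist_apply, mul_left_comm]

theorem dropLast_weightTwist (i j : Fin r) (f : FA r) :
    dropLast j (weightTwist p i f) = qq ^ (-p j i) • weightTwist p i (dropLast j f) := by
  ext w
  simp only [dropLast_apply, weightTwist_apply, Finsupp.smul_apply, smul_eq_mul, pairW_singleton,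
    List.map_append, List.map_singleton, List.sum_append, List.sum_singleton, neg_add_rev,
    zpow_add₀ qq_ne_zero, mul_assoc]

/-- The `q`-shuffle product as a bilinear map. -/
def shuffleHom : FA r →ₗ[K] FA r →ₗ[K] FA r :=
  Finsupp.linearCombination K fun w => Finsupp.linearCombination K fun x =>
    shAux p w.reverse x.reverse

theorem shuffleHom_apply (f g : FA r) : shuffleHom p f g = shuffle p f g := by
  rw [shuffle, shuffleHom, Finsupp.linearCombination_apply, LinearMap.finsupp_sum_apply]
  refine Finsupp.sum_congr fun w _ => ?_
  rw [LinearMap.smul_apply, Finsupp.linearCombination_apply, Finsupp.smul_sum]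
  exact Finsupp.sum_congr fun x _ => smul_smul _ _ _

theorem shuffleHom_single_single (w x : Word r) :
    shuffleHom p (Finsupp.single w 1) (Finsupp.single x 1) = shAux p w.reverse x.reverse := by
  simp [shuffleHom]

theorem shuffleHom_single_append_single_append (w x : Word r) (a b : Fin r) :
    shuffleHom p (Finsupp.single (w ++ [a]) 1) (Finsupp.single (x ++ [b]) 1) =
      Finsupp.mapDomain (fun u => u ++ [a])
        (shuffleHom p (Finsupp.single w 1) (Finsupp.single (x ++ [b]) 1)) +
      qq ^ (-pairW p (w ++ [a]) [b]) • Finsupp.mapDomain (fun u => u ++ [b])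
        (shuffleHom p (Finsupp.single (w ++ [a]) 1) (Finsupp.single x 1)) := by
  have pairW_reverse : pairW p (a :: w.reverse) [b] = pairW p (w ++ [a]) [b] := by
    simp [pairW_singleton, add_comm]
  simp only [shuffleHom_single_single, List.reverse_append, List.reverse_singleton,
    List.singleton_append, ← pairW_reverse]
  rw [shAux]

theorem shuffleHom_one_left (f : FA r) : shuffleHom p (Finsupp.single [] 1) f = f := by
  have h : shuffleHom p (Finsupp.single [] 1) = LinearMap.id := by
    ext w : 2
    simp [shuffleHom_single_single, shAux]
  rw [h, LinearMap.id_apply]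

theorem shuffleHom_one_right (f : FA r) : shuffleHom p f (Finsupp.single [] 1) = f := by
  have shAux_nil_right (w : Word r) : shAux p w [] = Finsupp.single w.reverse 1 := by
    cases w <;> simp [shAux]
  have h : (shuffleHom p).flip (Finsupp.single [] 1) = LinearMap.id := by
    ext w : 2
    simp [shuffleHom_single_single, shAux_nil_right]
  exact LinearMap.congr_fun h f

theorem shuffleHom_apply_nil (f g : FA r) : shuffleHom p f g [] = f [] * g [] := by
  suffices h : (shuffleHom p).compr₂ (Finsupp.lapply []) =
      (LinearMap.mul K K).compl₁₂ (Finsupp.lapply []) (Finsupp.lapply []) from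
    LinearMap.congr_fun₂ h f g
  have mapDomain_nil (c : Fin r) (h : FA r) : Finsupp.mapDomain (fun u => u ++ [c]) h [] = 0 :=
    Finsupp.mapDomain_of_notMem_range _ _ (by simp)
  ext w x
  suffices shuffleHom p (Finsupp.single w 1) (Finsupp.single x 1) [] =
    Finsupp.single w (1 : K) [] * Finsupp.single x (1 : K) [] by simpa
  induction w using List.reverseRecOn with
  | nil => simp [shuffleHom_one_left]
  | append_singleton w a =>
    induction x using List.reverseRecOn with
    | nil => simp [shuffleHom_one_right]
    | append_singleton x b => simp [shuffleHom_single_append_single_append, mapDomain_nil]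

theorem dropLast_shuffleHom (i : Fin r) (f g : FA r) :
    dropLast i (shuffleHom p f g) =
      shuffleHom p (dropLast i f) g + shuffleHom p (weightTwist p i f) (dropLast i g) := by
  suffices h : (shuffleHom p).compr₂ (dropLast i) =
      shuffleHom p ∘ₗ dropLast i + (shuffleHom p ∘ₗ weightTwist p i).compl₂ (dropLast i) from
    LinearMap.congr_fun₂ h f g
  ext w x : 4
  suffices dropLast i (shuffleHom p (Finsupp.single w 1) (Finsupp.single x 1)) =
      shuffleHom p (dropLast i (Finsupp.single w 1)) (Finsupp.single x 1) +
        shuffleHom p (weightTwist p i (Finsupp.single w 1)) (dropLast i (Finsupp.single x 1)) by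
    simpa
  rw [weightTwist_single]
  induction w using List.reverseRecOn with
  | nil => simp [shuffleHom_one_left, dropLast_single_nil, pairW_singleton]
  | append_singleton w a =>
    induction x using List.reverseRecOn with
    | nil => simp [shuffleHom_one_right, dropLast_single_nil]
    | append_singleton x b =>
      rw [shuffleHom_single_append_single_append, map_add, map_smul, dropLast_mapDomain_append,
        dropLast_mapDomain_append, dropLast_single_append, dropLast_single_append]
      congr 1
      · split_ifs <;> simp
      · split_ifs with hib
        · rw [hib, map_smul, LinearMap.smul_apply]
        · simp

theorem weightTwist_shuffleHom (i : Fin r) (f g : FA r) :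
    weightTwist p i (shuffleHom p f g) =
      shuffleHom p (weightTwist p i f) (weightTwist p i g) := by
  ext w
  induction w using List.reverseRecOn generalizing f g with
  | nil => simp [weightTwist_apply, shuffleHom_apply_nil, pairW_singleton]
  | append_singleton w j ih =>
    simp only [← dropLast_apply, dropLast_weightTwist, dropLast_shuffleHom, map_add, map_smul,
      LinearMap.smul_apply, Finsupp.add_apply, Finsupp.smul_apply, ih, smul_add,
      weightTwist_comm p i j]

theorem shuffleHom_assoc (f g h : FA r) :
    shuffleHom p (shuffleHom p f g) h = shuffleHom p f (shuffleHom p g h) := by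
  ext w
  induction w using List.reverseRecOn generalizing f g h with
  | nil => simp only [shuffleHom_apply_nil, mul_assoc]
  | append_singleton w j ih =>
    simp only [← dropLast_apply, dropLast_shuffleHom, map_add, LinearMap.add_apply,
      Finsupp.add_apply, ih, weightTwist_shuffleHom, add_assoc]

/-- The `q`-shuffle algebra `(F, *)`: a copy of `F` that carries the `q`-shuffle product. -/
def QShuffle (_p : Fin r → Fin r → ℤ) : Type := FA r

namespace QShuffle

instance : AddCommGroup (QShuffle p) := inferInstanceAs (AddCommGroup (FA r))

instance : Module K (QShuffle p) := inferInstanceAs (Module K (FA r))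

instance : Ring (QShuffle p) where
  __ := (inferInstance : AddCommGroup (QShuffle p))
  one := (Finsupp.single [] 1 : FA r)
  mul f g := shuffleHom p f g
  mul_assoc := shuffleHom_assoc p
  one_mul := shuffleHom_one_left p
  mul_one := shuffleHom_one_right p
  zero_mul := LinearMap.map_zero₂ (shuffleHom p)
  mul_zero f := map_zero (shuffleHom p f)
  left_distrib f := map_add (shuffleHom p f)
  right_distrib := LinearMap.map_add₂ (shuffleHom p)

instance : Algebra K (QShuffle p) :=
  Algebra.ofModule (LinearMap.map_smul₂ (shuffleHom p)) fun c f => map_smul (shuffleHom p f) c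

/-- The identity map from `F` to the `q`-shuffle algebra. -/
def of : FA r ≃ₗ[K] QShuffle p := LinearEquiv.refl K (FA r)

theorem of_single_nil : of p (Finsupp.single [] 1) = 1 := rfl

theorem of_shuffleHom (f g : FA r) : of p (shuffleHom p f g) = of p f * of p g := rfl

end QShuffle

end Shuffle

/-! ### The homomorphism `Ξ` -/

section Xi

/-- The identification of `F` with Mathlib's free algebra, sending a word to the product of its
letters. -/
def toFree : FA r ≃ₗ[K] FreeAlgebra K (Fin r) :=
  (Finsupp.domLCongr FreeMonoid.ofList).trans <| (MonoidAlgebra.coeffLinearEquiv K).symm.trans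
    FreeAlgebra.equivMonoidAlgebraFreeMonoid.symm.toLinearEquiv

theorem toFree_single (w : Word r) :
    toFree (Finsupp.single w 1) = (w.map (FreeAlgebra.ι K)).prod := by
  have h : toFree (Finsupp.single w 1) = FreeAlgebra.equivMonoidAlgebraFreeMonoid.symm
      (MonoidAlgebra.single (FreeMonoid.ofList w) (1 : K)) := by
    simp [toFree]
  rw [h]
  simp [FreeAlgebra.equivMonoidAlgebraFreeMonoid, FreeMonoid.lift_apply]

theorem toFree_cmul (f g : FA r) : toFree (cmul f g) = toFree f * toFree g := by
  have toFree_single_mul (w x : Word r) (c d : K) : toFree (Finsupp.single (w ++ x) (c * d)) =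
      toFree (Finsupp.single w c) * toFree (Finsupp.single x d) := by
    rw [← Finsupp.smul_single_one w c, ← Finsupp.smul_single_one x d,
      ← Finsupp.smul_single_one (w ++ x)]
    simp only [map_smul, toFree_single, List.map_append, List.prod_append, smul_mul_smul_comm]
  conv_rhs => rw [← Finsupp.sum_single f, ← Finsupp.sum_single g]
  simp only [cmul, Finsupp.sum, map_sum, toFree_single_mul, Finset.sum_mul_sum]

variable (p : Fin r → Fin r → ℤ)

/-- `Ξ` as an algebra homomorphism from the free algebra to the `q`-shuffle algebra. -/
def xiHom : FreeAlgebra K (Fin r) →ₐ[K] QShuffle p :=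
  FreeAlgebra.lift K fun i => QShuffle.of p (Finsupp.single [i] 1)

/-- The linear map to `F` underlying the homomorphism `Ξ`. -/
def xiLinear : FreeAlgebra K (Fin r) →ₗ[K] FA r :=
  (QShuffle.of p).symm.toLinearMap ∘ₗ (xiHom p).toLinearMap

theorem of_xiLinear (x : FreeAlgebra K (Fin r)) : QShuffle.of p (xiLinear p x) = xiHom p x :=
  (QShuffle.of p).apply_symm_apply _

theorem xiLinear_one : xiLinear p 1 = Finsupp.single [] 1 := by
  apply (QShuffle.of p).injective
  rw [of_xiLinear, map_one, QShuffle.of_single_nil]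

theorem xiLinear_ι (i : Fin r) : xiLinear p (FreeAlgebra.ι K i) = Finsupp.single [i] 1 := by
  apply (QShuffle.of p).injective
  rw [of_xiLinear, xiHom, FreeAlgebra.lift_ι_apply]

theorem xiLinear_mul (x y : FreeAlgebra K (Fin r)) :
    xiLinear p (x * y) = shuffleHom p (xiLinear p x) (xiLinear p y) := by
  apply (QShuffle.of p).injective
  simp only [of_xiLinear, QShuffle.of_shuffleHom, map_mul]

theorem xiLinear_toFree (f : FA r) : xiLinear p (toFree f) = xi p f := by
  have xiLinear_word (w : Word r) : xiLinear p (toFree (Finsupp.single w 1)) = xiWord p w := by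
    rw [toFree_single]
    induction w with
    | nil => exact xiLinear_one p
    | cons i w ih =>
      rw [List.map_cons, List.prod_cons, xiLinear_mul, xiLinear_ι, ih, shuffleHom_apply, xiWord]
  have h : xiLinear p ∘ₗ toFree.toLinearMap = Finsupp.linearCombination K (xiWord p) := by
    ext w : 2
    simpa using xiLinear_word w
  exact LinearMap.congr_fun h f

theorem xi_cmul (f g : FA r) : xi p (cmul f g) = shuffle p (xi p f) (xi p g) := by
  simp only [← xiLinear_toFree, toFree_cmul, xiLinear_mul, shuffleHom_apply]

theorem inU_xiLinear (x : FreeAlgebra K (Fin r)) : InU p (xiLinear p x) := by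
  induction x using FreeAlgebra.induction with
  | grade0 c =>
    rw [Algebra.algebraMap_eq_smul_one, map_smul, xiLinear_one]
    exact InU.smul c InU.one
  | grade1 i => rw [xiLinear_ι]; exact InU.letter i
  | mul x y hx hy => rw [xiLinear_mul, shuffleHom_apply]; exact InU.mul hx hy
  | add x y hx hy => rw [map_add]; exact InU.add hx hy

theorem exists_xi_eq_of_inU {h : FA r} (hh : InU p h) : ∃ f : FA r, xi p f = h := by
  simp only [← xiLinear_toFree, ← toFree.surjective.exists (p := fun x => xiLinear p x = h)]
  induction hh with
  | letter i => exact ⟨_, xiLinear_ι p i⟩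
  | one => exact ⟨1, xiLinear_one p⟩
  | add _ _ hf hg =>
    obtain ⟨⟨x, rfl⟩, ⟨y, rfl⟩⟩ := And.intro hf hg
    exact ⟨x + y, map_add _ x y⟩
  | smul c _ hf =>
    obtain ⟨x, rfl⟩ := hf
    exact ⟨c • x, map_smul _ c x⟩
  | mul _ _ hf hg =>
    obtain ⟨⟨x, rfl⟩, ⟨y, rfl⟩⟩ := And.intro hf hg
    exact ⟨x * y, by rw [xiLinear_mul, shuffleHom_apply]⟩

theorem inU_iff_exists_xi_eq {h : FA r} : InU p h ↔ ∃ f : FA r, xi p f = h := by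
  refine ⟨exists_xi_eq_of_inU p, ?_⟩
  rintro ⟨f, rfl⟩
  rw [← xiLinear_toFree]
  exact inU_xiLinear p _

/-- The braiding matrix `q^{-(α_j, α_i)}` of the `q`-shuffle product. -/
def braiding (i j : Fin r) : K := qq ^ (-p j i)

theorem dropLast_xiLinear (i : Fin r) (x : FreeAlgebra K (Fin r)) :
    dropLast i (xiLinear p x) = xiLinear p ((SkewDerivations.free (braiding p)).derivL i x) := by
  let S := SkewDerivations.free (braiding p)
  have gen_eq (j : Fin r) : S.gen j = FreeAlgebra.ι K j := rfl
  have dropLast_letter (j : Fin r) : dropLast i (Finsupp.single [j] 1) =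
      if i = j then Finsupp.single [] 1 else 0 := dropLast_single_append i j [] 1
  have twist_letter (j : Fin r) : weightTwist p i (Finsupp.single [j] 1) =
      braiding p i j • Finsupp.single [j] 1 := by
    rw [weightTwist_single, pairW_singleton, List.map_singleton, List.sum_singleton, braiding]
  have h : dropLast i ∘ₗ xiLinear p = xiLinear p ∘ₗ S.derivL i := by
    refine S.linearMap_ext ?_ fun j x ih => ?_
    · simp [xiLinear_one, dropLast_single_nil, S.derivL_one]
    · simp only [LinearMap.comp_apply] at ih ⊢
      rw [S.derivL_gen_mul, map_add, map_smul, gen_eq, xiLinear_mul, xiLinear_mul, xiLinear_ι,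
        dropLast_shuffleHom, dropLast_letter, twist_letter, ih, map_smul, LinearMap.smul_apply]
      congr 1
      split_ifs <;> simp [shuffleHom_one_left]
  exact LinearMap.congr_fun h x

theorem xiLinear_apply_nil (x : FreeAlgebra K (Fin r)) :
    xiLinear p x [] = FreeAlgebra.algebraMapInv x := by
  induction x using FreeAlgebra.induction with
  | grade0 c => simp [Algebra.algebraMap_eq_smul_one, xiLinear_one]
  | grade1 i => simp [xiLinear_ι, FreeAlgebra.algebraMapInv]
  | mul x y hx hy => rw [xiLinear_mul, shuffleHom_apply_nil, hx, hy, map_mul]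
  | add x y hx hy => rw [map_add, Finsupp.add_apply, hx, hy, map_add]

theorem xiLinear_apply_eq_coeff (x : FreeAlgebra K (Fin r)) (w : Word r) :
    xiLinear p x w =
      (SkewDerivations.free (braiding p)).coeff FreeAlgebra.algebraMapInv w x := by
  induction w using List.reverseRecOn generalizing x with
  | nil => exact xiLinear_apply_nil p x
  | append_singleton w i ih =>
    rw [SkewDerivations.coeff_append_singleton, ← ih, ← dropLast_xiLinear, dropLast_apply]

theorem xi_eq_zero_iff_toFree_mem_radical {f : FA r} :
    xi p f = 0 ↔
      toFree f ∈ (SkewDerivations.free (braiding p)).radical FreeAlgebra.algebraMapInv := by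
  simp only [SkewDerivations.mem_radical, ← xiLinear_apply_eq_coeff, xiLinear_toFree,
    Finsupp.ext_iff, Finsupp.zero_apply]

end Xi

/-! ### The kernel of `Ξ` -/

open scoped Pointwise in
theorem mem_twoSidedIdeal_span_iff_mem_span {R A : Type*} [CommRing R] [Ring A] [Algebra R A]
    {b : Set A} (hb : Submodule.span R b = ⊤) {s : Set A} {x : A} :
    x ∈ TwoSidedIdeal.span s ↔ x ∈ Submodule.span R (b * s * b) := by
  rw [← Submodule.span_mul_span, ← Submodule.span_mul_span, hb]
  constructor
  · intro hx
    induction hx using TwoSidedIdeal.span_induction with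
    | mem y hy =>
      simpa using Submodule.mul_mem_mul
        (Submodule.mul_mem_mul (Submodule.mem_top (x := (1 : A))) (Submodule.subset_span hy))
        (Submodule.mem_top (R := R) (x := (1 : A)))
    | zero => exact zero_mem _
    | add y z _ _ hy hz => exact add_mem hy hz
    | neg y _ hy => exact neg_mem hy
    | left_absorb a y _ hy =>
      have h := Submodule.mul_mem_mul (Submodule.mem_top (R := R) (x := a)) hy
      rw [← mul_assoc, ← mul_assoc] at h
      have hle : ⊤ * ⊤ * Submodule.span R s * ⊤ ≤ ⊤ * Submodule.span R s * ⊤ :=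
        mul_le_mul' (mul_le_mul' le_top le_rfl) le_rfl
      exact hle h
    | right_absorb a y _ hy =>
      have h := Submodule.mul_mem_mul hy (Submodule.mem_top (R := R) (x := a))
      rw [mul_assoc] at h
      have hle : ⊤ * Submodule.span R s * (⊤ * ⊤) ≤ ⊤ * Submodule.span R s * ⊤ :=
        mul_le_mul' le_rfl le_top
      exact hle h
  · suffices h : ⊤ * Submodule.span R s * ⊤ ≤
        (TwoSidedIdeal.span s).asIdeal.restrictScalars R from fun hx => h hx
    have hs : Submodule.span R s ≤ (TwoSidedIdeal.span s).asIdeal.restrictScalars R :=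
      Submodule.span_le.mpr TwoSidedIdeal.subset_span
    have top_mul_le : ⊤ * Submodule.span R s ≤ (TwoSidedIdeal.span s).asIdeal.restrictScalars R :=
      Submodule.mul_le.mpr fun a _ c hc => (TwoSidedIdeal.span s).mul_mem_left a c (hs hc)
    exact Submodule.mul_le.mpr fun y hy z _ =>
      (TwoSidedIdeal.span s).mul_mem_right y z (top_mul_le hy)

open scoped Pointwise in
theorem mem_span_cmul_iff_toFree_mem_span {s : Set (FA r)} {f : FA r} :
    f ∈ Submodule.span K {x : FA r | ∃ (z t : Word r), ∃ y ∈ s,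
        x = cmul (cmul (Finsupp.single z 1) y) (Finsupp.single t 1)} ↔
      toFree f ∈ TwoSidedIdeal.span (toFree '' s) := by
  let b : Set (FreeAlgebra K (Fin r)) := Set.range fun w : Word r => toFree (Finsupp.single w 1)
  have hb : Submodule.span K b = ⊤ :=
    (Finsupp.basisSingleOne.map (toFree (r := r))).span_eq
  have image_eq : toFree '' {x : FA r | ∃ (z t : Word r), ∃ y ∈ s,
      x = cmul (cmul (Finsupp.single z 1) y) (Finsupp.single t 1)} = b * toFree '' s * b := by
    ext x
    simp only [b, Set.mem_mul, Set.mem_image, Set.mem_ofPred_eq, Set.mem_range]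
    constructor
    · rintro ⟨_, ⟨z, t, y, hy, rfl⟩, rfl⟩
      exact ⟨_, ⟨_, ⟨z, rfl⟩, _, ⟨y, hy, rfl⟩, rfl⟩, _, ⟨t, rfl⟩, by rw [toFree_cmul, toFree_cmul]⟩
    · rintro ⟨_, ⟨_, ⟨z, rfl⟩, _, ⟨y, hy, rfl⟩, rfl⟩, _, ⟨t, rfl⟩, rfl⟩
      exact ⟨_, ⟨z, t, y, hy, rfl⟩, by rw [toFree_cmul, toFree_cmul]⟩
  rw [mem_twoSidedIdeal_span_iff_mem_span hb, ← image_eq]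
  exact (Submodule.apply_mem_span_image_iff_mem_span (f := toFree.toLinearMap)
    toFree.injective).symm

/-- The element `Σ_{k+l=n} (−1)^k [n choose k] w_i^k w_j w_i^l` of `F`, with `q`-binomials in
`q^d`. -/
def qSerre (d : ℤ) (n : ℕ) (i j : Fin r) : FA r :=
  ∑ k ∈ Finset.range (n + 1), ((-1 : K) ^ k * qBinom d n k) •
    Finsupp.single (List.replicate k i ++ [j] ++ List.replicate (n - k) i) 1

theorem toFree_qSerre {χ : Fin r → Fin r → K} {d : ℤ} {n : ℕ} {i j : Fin r} (hd : d ≠ 0)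
    (hii : χ i i = qq ^ (-(d * 2))) (hij : χ i j = qq ^ (-(d * (1 - n)))) :
    toFree (qSerre d n i j) = (-1 : K) ^ n •
      ((SkewDerivations.free χ).qAd i ^ n) ((SkewDerivations.free χ).gen j) := by
  have sign_sq : (-1 : K) ^ n * (-1) ^ n = 1 := by rw [← mul_pow]; simp
  rw [SkewDerivations.qAd_pow_gen_eq_smul_sum_qBinom _ hd hii hij, smul_smul, sign_sq, one_smul]
  simp only [qSerre, map_sum, map_smul, toFree_single, List.map_append, List.map_replicate,
    List.map_singleton, List.prod_append, List.prod_replicate, List.prod_singleton]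
  rfl

theorem exists_sum_map_pos_of_posdef {ι : Type*} [Fintype ι] {p : ι → ι → ℤ}
    (hp : ∀ v : ι → ℚ, v ≠ 0 → 0 < ∑ i, ∑ j, v i * v j * (p i j : ℚ))
    {ν : Multiset ι} (hν : ν ≠ 0) : ∃ i, 0 < (ν.map (p i)).sum := by
  classical
  by_contra! hnonpos
  let v (i : ι) : ℚ := ν.count i
  have hv : v ≠ 0 := by
    obtain ⟨i, hi⟩ := Multiset.exists_mem_of_ne_zero hν
    exact fun h => (Multiset.count_pos.mpr hi).ne' (Nat.cast_eq_zero.mp (congrFun h i))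
  have sum_eq (i : ι) : (((ν.map (p i)).sum : ℤ) : ℚ) = ∑ j, v j * p i j := by
    rw [Finset.sum_multiset_map_count, Finset.sum_subset (Finset.subset_univ _)]
    · simp [v]
    · simp +contextual
  have form_eq : ∑ i, ∑ j, v i * v j * (p i j : ℚ) = ∑ i, v i * ((ν.map (p i)).sum : ℤ) := by
    simp only [sum_eq, Finset.mul_sum, mul_assoc]
  refine (hp v hv).not_ge (form_eq.trans_le (Finset.sum_nonpos fun i _ => ?_))
  exact mul_nonpos_of_nonneg_of_nonpos (Nat.cast_nonneg _) (Int.cast_nonpos.mpr (hnonpos i))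

theorem prod_map_qq_zpow {ι : Type*} (ν : Multiset ι) (c : ι → ℤ) :
    (ν.map fun j => qq ^ (-c j)).prod = qq ^ (-(ν.map c).sum) := by
  induction ν using Multiset.induction with
  | empty => simp
  | cons j ν ih =>
    rw [Multiset.map_cons, Multiset.prod_cons, ih, Multiset.map_cons, Multiset.sum_cons, neg_add,
      zpow_add₀ qq_ne_zero]

theorem geom_sum_qq_zpow_ne_zero {m : ℤ} (hm : m ≠ 0) (n : ℕ) :
    ∑ k ∈ Finset.range (n + 1), (qq ^ m) ^ k ≠ 0 := by
  intro h
  have hgeom := geom_sum_mul (qq ^ m) (n + 1)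
  rw [h, zero_mul, ← zpow_natCast, ← zpow_mul] at hgeom
  exact qq_zpow_ne_one (mul_ne_zero hm (by positivity)) (sub_eq_zero.mp hgeom.symm)

section Cartan

variable {p a : Fin r → Fin r → ℤ} {d : Fin r → ℤ}

theorem twoSidedIdeal_span_toFree_qSerre (hp : ∀ i j, p i j = d i * a i j)
    (hdiag : ∀ i, a i i = 2)
    (hoffdiag : ∀ i j, i ≠ j → a i j ≤ 0) (hd : ∀ i, d i ≠ 0)
    (hsymm : ∀ i j, p i j = p j i) :
    TwoSidedIdeal.span
        (toFree '' {y | ∃ i j, i ≠ j ∧ y = qSerre (d i) (1 - a i j).toNat i j}) =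
      (SkewDerivations.free (braiding p)).serreIdeal
        fun i j => (-a i j).toNat := by
  set S := SkewDerivations.free (braiding p)
  have toFree_qSerre_eq (i j : Fin r) (hij : i ≠ j) :
      toFree (qSerre (d i) (1 - a i j).toNat i j) =
        (-1 : K) ^ ((-a i j).toNat + 1) • (S.qAd i ^ ((-a i j).toNat + 1)) (S.gen j) := by
    have hneg := hoffdiag i j hij
    rw [show (1 - a i j).toNat = (-a i j).toNat + 1 by omega]
    refine toFree_qSerre (hd i) (by rw [braiding, hp, hdiag]) ?_
    rw [braiding, ← hsymm i j, hp, show 1 - (((-a i j).toNat + 1 : ℕ) : ℤ) = a i j by omega]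
  refine le_antisymm (TwoSidedIdeal.span_le.mpr ?_) (TwoSidedIdeal.span_le.mpr ?_)
  · rintro _ ⟨_, ⟨i, j, hij, rfl⟩, rfl⟩
    rw [toFree_qSerre_eq i j hij]
    exact SkewDerivations.smul_mem_serreIdeal _ (SkewDerivations.qAd_pow_gen_mem_serreIdeal hij)
  · rintro _ ⟨i, j, hij, rfl⟩
    have sign_smul : (S.qAd i ^ ((-a i j).toNat + 1)) (S.gen j) =
        (-1 : K) ^ ((-a i j).toNat + 1) • toFree (qSerre (d i) (1 - a i j).toNat i j) := by
      rw [toFree_qSerre_eq i j hij, smul_smul, ← mul_pow, neg_one_mul, neg_neg, one_pow, one_smul]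
    rw [sign_smul, Algebra.smul_def]
    exact TwoSidedIdeal.mul_mem_left _ _ _ (TwoSidedIdeal.subset_span ⟨_, ⟨i, j, hij, rfl⟩, rfl⟩)

theorem exists_prod_map_braiding_sq_mul_pow_ne_one (hsymm : ∀ i j, p i j = p j i)
    (hdiag : ∀ i, 0 ≤ p i i)
    (hp : ∀ v : Fin r → ℚ, v ≠ 0 → 0 < ∑ i, ∑ j, v i * v j * (p i j : ℚ))
    {ν : Multiset (Fin r)} (hν : ν ≠ 0) :
    ∃ i, ∀ n : ℕ, (ν.map (braiding p i)).prod ^ 2 * braiding p i i ^ n ≠ 1 := by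
  obtain ⟨i, hi⟩ := exists_sum_map_pos_of_posdef hp hν
  refine ⟨i, fun n => ?_⟩
  have hprod : (ν.map (braiding p i)).prod = qq ^ (-(ν.map (p i)).sum) := by
    rw [← prod_map_qq_zpow]
    exact congrArg Multiset.prod (Multiset.map_congr rfl fun j _ => by rw [braiding, hsymm j i])
  rw [hprod, braiding, ← zpow_natCast, ← zpow_natCast, ← zpow_mul, ← zpow_mul,
    ← zpow_add₀ qq_ne_zero]
  have hn : 0 ≤ p i i * n := mul_nonneg (hdiag i) n.cast_nonneg
  exact qq_zpow_ne_one (by push_cast; linarith)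

theorem xi_eq_zero_iff_toFree_mem_span (hp : ∀ i j, p i j = d i * a i j)
    (hdiag : ∀ i, a i i = 2)
    (hoffdiag : ∀ i j, i ≠ j → a i j ≤ 0) (hsymm : ∀ i j, p i j = p j i)
    (hposdef : ∀ v : Fin r → ℚ, v ≠ 0 → 0 < ∑ i, ∑ j, v i * v j * (p i j : ℚ))
    {f : FA r} : xi p f = 0 ↔ toFree f ∈ TwoSidedIdeal.span
      (toFree '' {y | ∃ i j, i ≠ j ∧ y = qSerre (d i) (1 - a i j).toNat i j}) := by
  have hd (i : Fin r) : 0 < d i := by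
    have h := hposdef (Pi.single i 1) (by simp)
    simpa [Pi.single_apply, hp, hdiag] using h
  have braiding_self (i : Fin r) : braiding p i i = qq ^ (-(d i * 2)) := by
    rw [braiding, hp, hdiag]
  rw [twoSidedIdeal_span_toFree_qSerre hp hdiag hoffdiag (fun i => (hd i).ne') hsymm,
    xi_eq_zero_iff_toFree_mem_radical]
  refine SkewDerivations.mem_radical_iff_mem_serreIdeal (fun i => ?_) (fun i j => ?_)
    (fun i j hij => ?_) (fun i => ?_) (fun i n => ?_) fun ν hν => ?_
  · exact FreeAlgebra.lift_ι_apply _ i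
  · rw [braiding, braiding, hsymm j i]
  · have hneg := hoffdiag i j hij
    rw [braiding_self, braiding, ← hsymm i j, hp, ← zpow_natCast, ← zpow_natCast, ← zpow_mul,
      ← zpow_mul, ← zpow_add₀ qq_ne_zero, Int.toNat_of_nonneg (by omega)]
    exact (congrArg (qq ^ ·) (by push_cast; ring)).trans (zpow_zero qq)
  · exact zpow_ne_zero _ qq_ne_zero
  · rw [braiding_self]
    exact geom_sum_qq_zpow_ne_zero (by have := hd i; omega) n
  · exact exists_prod_map_braiding_sq_mul_pow_ne_one hsymm
      (fun i => by rw [hp, hdiag]; exact mul_nonneg (hd i).le zero_le_two) hposdef hν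

end Cartan

theorem rosso_green_embedding_general {r : ℕ} {p a : Fin r → Fin r → ℤ} {d : Fin r → ℤ}
    (hp : ∀ i j, p i j = d i * a i j) (hdiag : ∀ i, a i i = 2) (hoffdiag : ∀ i j, i ≠ j → a i j ≤ 0)
    (hsymm : ∀ i j, p i j = p j i)
    (hposdef : ∀ v : Fin r → ℚ, v ≠ 0 → 0 < ∑ i, ∑ j, v i * v j * (p i j : ℚ)) :
    (∀ f : FA r, xi p f = 0 ↔
      f ∈ Submodule.span K {x : FA r | ∃ (z t : Word r) (i j : Fin r), i ≠ j ∧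
        x = cmul (cmul (Finsupp.single z 1) (qSerre (d i) (1 - a i j).toNat i j))
          (Finsupp.single t 1)}) ∧
    (∀ f g : FA r, xi p (cmul f g) = shuffle p (xi p f) (xi p g)) ∧
    (∀ h : FA r, InU p h ↔ ∃ f : FA r, xi p f = h) := by
  refine ⟨fun f => ?_, xi_cmul p, fun h => inU_iff_exists_xi_eq p⟩
  rw [xi_eq_zero_iff_toFree_mem_span hp hdiag hoffdiag hsymm hposdef,
    ← mem_span_cmul_iff_toFree_mem_span]
  suffices h : ∀ x : FA r,
      (∃ z t : Word r, ∃ y ∈ {y | ∃ i j, i ≠ j ∧ y = qSerre (d i) (1 - a i j).toNat i j},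
        x = cmul (cmul (Finsupp.single z 1) y) (Finsupp.single t 1)) ↔
      ∃ (z t : Word r) (i j : Fin r), i ≠ j ∧
        x = cmul (cmul (Finsupp.single z 1) (qSerre (d i) (1 - a i j).toNat i j))
          (Finsupp.single t 1) by
    simp only [h]
  refine fun x => ⟨?_, ?_⟩
  · rintro ⟨z, t, _, ⟨i, j, hij, rfl⟩, rfl⟩
    exact ⟨z, t, i, j, hij, rfl⟩
  · rintro ⟨z, t, i, j, hij, rfl⟩
    exact ⟨z, t, _, ⟨i, j, hij, rfl⟩, rfl⟩

/-- Rosso–Green: the kernel of `Ξ` is the two-sided ideal of `(F, concatenation)`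
generated by the q-Serre elements `S_{ij}` (equivalently, the span of all
`z·S_{ij}·t`); moreover `Ξ` is multiplicative from the concatenation product to the
q-shuffle product and has image `𝒰`, so it induces a `ℚ(q)`-algebra isomorphism from
`U_q(n)` — the free algebra on `e_1,…,e_r` modulo the q-Serre relations — onto `𝒰`. -/
theorem rosso_green_embedding {r : ℕ} (hr : 1 ≤ r) (C : CartanData r) :
    (∀ f : FA r, xi C.p f = 0 ↔
      f ∈ Submodule.span K {x : FA r | ∃ (z t : Word r) (i j : Fin r), i ≠ j ∧
        x = cmul (cmul (Finsupp.single z 1) (serre C i j)) (Finsupp.single t 1)}) ∧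
    (∀ f g : FA r, xi C.p (cmul f g) = shuffle C.p (xi C.p f) (xi C.p g)) ∧
    (∀ h : FA r, InU C.p h ↔ ∃ f : FA r, xi C.p f = h) :=
  rosso_green_embedding_general (fun _ _ => rfl) C.diag C.offdiag C.dsymm C.posdef
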